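/- Let 1 < p < ∞ and p* = p/(p−1). Assume (X, d, μ) is complete, μ is Borel-regular and doubling, and X supports a weak 1-Poincaré inequality. Let G ⊂ X be a domain with compact closure and E, F ⊂ G disjoint continua each containing at least two points. If mod_{p*} Γ*(E, F; G) = ∞, then mod_p Γ(E, F; G) = 0. -/

import Mathlib

open MeasureTheory Metric Set ENNReal NNReal Filter Topology

noncomputable section

variable {X : Type*}

/-- A measure is Borel-regular: every set is contained in a Borel set of the same measure. -/
def BorelRegular [MeasurableSpace X] (μ : Measure X) : Prop :=
  ∀ s : Set X, ∃ t : Set X, MeasurableSet t ∧ s ⊆ t ∧ μ t = μ s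

/-- μ is doubling with constant `Cμ`: `0 < μ(2B) ≤ Cμ μ(B) < ∞` for all balls. -/
def IsDoublingWith [PseudoMetricSpace X] [MeasurableSpace X] (μ : Measure X) (Cμ : ℝ) : Prop :=
  ∀ (x : X) (r : ℝ), 0 < r →
    0 < μ (ball x (2 * r)) ∧ μ (ball x (2 * r)) ≤ ENNReal.ofReal Cμ * μ (ball x r) ∧
      μ (ball x r) < ⊤

/-- `ρ` is an upper gradient of `u` on the set `V`: for every `L ≥ 0` and every
1-Lipschitz curve `γ : [0, L] → V`, `|u(γ L) − u(γ 0)| ≤ ∫₀^L ρ(γ t) dt`. -/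
def IsUpperGradientOn [PseudoMetricSpace X] (u : X → ℝ) (ρ : X → ℝ≥0∞) (V : Set X) : Prop :=
  ∀ L : ℝ, 0 ≤ L → ∀ γ : ℝ → X, LipschitzOnWith 1 γ (Icc 0 L) → MapsTo γ (Icc 0 L) V →
    ENNReal.ofReal |u (γ L) - u (γ 0)| ≤ ∫⁻ t in Icc 0 L, ρ (γ t)

/-- `X` supports a weak `p`-Poincaré inequality with constants `CP`, `lP`. -/
def WeakPoincare [PseudoMetricSpace X] [MeasurableSpace X] (μ : Measure X)
    (p CP lP : ℝ) : Prop :=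
  ∀ u : X → ℝ, LocallyIntegrable u μ →
    ∀ ρ : X → ℝ≥0∞, Measurable ρ → IsUpperGradientOn u ρ univ →
    ∀ (x : X) (r : ℝ), 0 < r →
      ENNReal.ofReal (⨍ y in ball x r, |u y - ⨍ z in ball x r, u z ∂μ| ∂μ) ≤
        ENNReal.ofReal (CP * diam (ball x r)) *
          (⨍⁻ y in ball x (lP * r), ρ y ^ p ∂μ) ^ (1 / p)

/-- `X` is Ahlfors `Q`-regular with constants `0 < a ≤ A`. -/
def AhlforsRegular [PseudoMetricSpace X] [MeasurableSpace X] (μ : Measure X)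
    (Q a A : ℝ) : Prop :=
  0 < a ∧ a ≤ A ∧ ∀ (x : X) (r : ℝ), 0 < r → ENNReal.ofReal r < EMetric.diam (univ : Set X) →
    ENNReal.ofReal (a * r ^ Q) ≤ μ (ball x r) ∧ μ (ball x r) ≤ ENNReal.ofReal (A * r ^ Q)

/-- `ρ` is admissible for a family `M` of Borel measures: `∫ ρ dν ≥ 1` for all `ν ∈ M`. -/
def Admissible [MeasurableSpace X] (M : Set (Measure X)) (ρ : X → ℝ≥0∞) : Prop :=
  Measurable ρ ∧ ∀ ν ∈ M, 1 ≤ ∫⁻ x, ρ x ∂ν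

/-- The `q`-modulus of a family of Borel measures. -/
def modulus [MeasurableSpace X] (μ : Measure X) (q : ℝ) (M : Set (Measure X)) : ℝ≥0∞ :=
  ⨅ (ρ : X → ℝ≥0∞) (_ : Admissible M ρ), ∫⁻ x, ρ x ^ q ∂μ

/-- `ρ` is `q`-weakly admissible for `M`. -/
def WeaklyAdmissible [MeasurableSpace X] (μ : Measure X) (q : ℝ) (M : Set (Measure X))
    (ρ : X → ℝ≥0∞) : Prop :=
  ∃ N ⊆ M, modulus μ q N = 0 ∧ Admissible (M \ N) ρ

/-- The family `Γ(E, F; G)` of measures `H¹` restricted to images of injective rectifiable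
curves joining `E` and `F` in `G`. -/
def pathFamily [MetricSpace X] [MeasurableSpace X] [BorelSpace X] (E F G : Set X) :
    Set (Measure X) :=
  {ν | ∃ γ : ℝ → X, ContinuousOn γ (Icc 0 1) ∧ InjOn γ (Icc 0 1) ∧
    eVariationOn γ (Icc 0 1) ≠ ⊤ ∧ MapsTo γ (Icc 0 1) G ∧ γ 0 ∈ E ∧ γ 1 ∈ F ∧
    ν = (μH[1]).restrict (γ '' Icc 0 1)}

/-- `S` separates `E` from `F` in `G`: they lie in different connected components of `G \ S`. -/
def SeparatesIn [TopologicalSpace X] (S E F G : Set X) : Prop :=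
  ∃ x ∈ G \ S, ∃ y ∈ G \ S,
    E ⊆ connectedComponentIn (G \ S) x ∧ F ⊆ connectedComponentIn (G \ S) y ∧
    connectedComponentIn (G \ S) x ≠ connectedComponentIn (G \ S) y

/-- The family `Γ*(E, F; G)` of measures `H^d` restricted to `S ∩ G`, where `S` ranges over
compact subsets of the closure of `G`, of finite `H^d`-measure in `G`, separating `E` and `F`. -/
def surfaceFamilyH [MetricSpace X] [MeasurableSpace X] [BorelSpace X] (d : ℝ)
    (E F G : Set X) : Set (Measure X) :=
  {ν | ∃ S : Set X, IsCompact S ∧ S ⊆ closure G ∧ μH[d] (S ∩ G) ≠ ⊤ ∧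
    SeparatesIn S E F G ∧ ν = (μH[d]).restrict (S ∩ G)}

/-- The codimension-1 spherical Hausdorff measure associated to `μ`. -/
def codimOneHausdorff [PseudoMetricSpace X] [MeasurableSpace X] (μ : Measure X)
    (A : Set X) : ℝ≥0∞ :=
  ⨆ (δ : ℝ) (_ : 0 < δ),
    ⨅ (c : ℕ → X) (r : ℕ → ℝ) (_ : A ⊆ ⋃ i, ball (c i) (r i))
      (_ : ∀ i, 0 < r i ∧ r i ≤ δ), ∑' i, μ (ball (c i) (r i)) / ENNReal.ofReal (r i)

/-- The integral `∫_A g d𝓗` of `g` over `A` against the codimension-1 spherical Hausdorff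
measure, defined by the layer-cake formula. -/
def codimIntegral [PseudoMetricSpace X] [MeasurableSpace X] (μ : Measure X) (A : Set X)
    (g : X → ℝ≥0∞) : ℝ≥0∞ :=
  ∫⁻ s in Ioi (0 : ℝ), codimOneHausdorff μ (A ∩ {x | ENNReal.ofReal s < g x})

/-- The collection of "surfaces" of `Γ*(E, F; G)`: compact subsets of the closure of `G` of
finite codimension-1 measure in `G` separating `E` and `F` in `G`. -/
def surfaceSets [PseudoMetricSpace X] [MeasurableSpace X] (μ : Measure X) (E F G : Set X) :
    Set (Set X) :=
  {S | IsCompact S ∧ S ⊆ closure G ∧ codimOneHausdorff μ (S ∩ G) ≠ ⊤ ∧ SeparatesIn S E F G}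

/-- The `q`-modulus of a family `𝒮` of surfaces, each equipped with the codimension-1
spherical Hausdorff measure restricted to `S ∩ G`. -/
def surfModulus [PseudoMetricSpace X] [MeasurableSpace X] (μ : Measure X) (q : ℝ)
    (𝒮 : Set (Set X)) (G : Set X) : ℝ≥0∞ :=
  ⨅ (ρ : X → ℝ≥0∞)
    (_ : Measurable ρ ∧ ∀ S ∈ 𝒮, 1 ≤ codimIntegral μ (S ∩ G) ρ),
    ∫⁻ x, ρ x ^ q ∂μ

/-- The upper Lebesgue integral of `f` over `s ⊆ ℝ`. -/
def upperIntegralOn (s : Set ℝ) (f : ℝ → ℝ≥0∞) : ℝ≥0∞ :=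
  ⨅ (ψ : ℝ → ℝ≥0∞) (_ : Measurable ψ ∧ ∀ t, f t ≤ ψ t), ∫⁻ t in s, ψ t

/-- The restricted Hardy–Littlewood maximal function `M_R w`. -/
def restrMaximal [PseudoMetricSpace X] [MeasurableSpace X] (μ : Measure X) (R : ℝ)
    (w : X → ℝ≥0∞) (x : X) : ℝ≥0∞ :=
  ⨆ (r : ℝ) (_ : 0 < r ∧ r ≤ R), ⨍⁻ y in ball x r, w y ∂μ

/-- `x` is a Lebesgue point of `v`. -/
def LebesguePoint [PseudoMetricSpace X] [MeasurableSpace X] (μ : Measure X) (v : X → ℝ)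
    (x : X) : Prop :=
  Tendsto (fun r : ℝ => ⨍ y in ball x r, |v y - v x| ∂μ) (𝓝[>] 0) (𝓝 0)

/-- `u` is locally Lipschitz on `G`. -/
def IsLocallyLipschitzOn [PseudoMetricSpace X] (u : X → ℝ) (G : Set X) : Prop :=
  ∀ x ∈ G, ∃ (K : ℝ≥0) (t : Set X), t ∈ 𝓝[G] x ∧ LipschitzOnWith K u t

/-- `X` is a geodesic metric space. -/
def IsGeodesicSpace (X : Type*) [MetricSpace X] : Prop :=
  ∀ x y : X, ∃ γ : ℝ → X, γ 0 = x ∧ γ (dist x y) = y ∧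
    ∀ s ∈ Icc (0 : ℝ) (dist x y), ∀ t ∈ Icc (0 : ℝ) (dist x y), dist (γ s) (γ t) = |s - t|

/-- `G` is a domain (open connected set) with compact closure. -/
def IsDomainWithCompactClosure [TopologicalSpace X] (G : Set X) : Prop :=
  IsOpen G ∧ IsConnected G ∧ IsCompact (closure G)

/-- `E` is a nondegenerate continuum: compact, connected, with at least two points. -/
def IsNondegContinuum [TopologicalSpace X] (E : Set X) : Prop :=
  IsCompact E ∧ IsConnected E ∧ E.Nontrivial

/-- The distance between two sets. -/
def setDist [PseudoMetricSpace X] (E F : Set X) : ℝ :=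
  sInf ((fun p : X × X => dist p.1 p.2) '' (E ×ˢ F))

/-- The `s`-dimensional Hausdorff content. -/
def hContent {Y : Type*} [EMetricSpace Y] (s : ℝ) (E : Set Y) : ℝ≥0∞ :=
  ⨅ (U : ℕ → Set Y) (_ : E ⊆ ⋃ i, U i), ∑' i, EMetric.diam (U i) ^ s

end

/-! If `S` separates `E` from `F` in `G`, the component `U` of `G \ S` containing `E` is open and
its boundary in `G` lies in `S`. Along a curve from `E` to `F` the averages over `δ`-balls of the
indicator function of `U` drop from `1` to `0`, while the Poincaré inequality and doubling control
their oscillation by the codimension-1 measure `H` of `S` near the curve. Hence, for all small `δ`,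
a constant multiple of `x ↦ H(S ∩ G ∩ B(x, Λδ)) / μ(B(x, δ))` is admissible for the curves that
stay away from the boundary of `G`.

If the modulus of these curves is not zero, uniform convexity of the `p`-th power produces a
minimizing sequence dominated by a single `R ∈ L^p`, and the first variation shows that the pairing
of `h = R^(p-1) ∈ L^{p*}` with every admissible density is bounded below. Pairing `h` with the
density of `S`, Fubini's theorem gives the integral over `S` of an average of `h` at scale `δ`.
Along suitable scales tending to `0` these averages are dominated by a function `g ∈ L^{p*}` that
does not depend on `S`. A multiple of `g` is then admissible for the surfaces, so their modulus is
finite. -/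

section CodimensionOneMeasure

variable {X : Type*} [MeasurableSpace X]

section OuterMeasure

variable [MetricSpace X] {μ : Measure X} {A : Set X} {δ δ' : ℝ}

/-- The gauge of Carathéodory's construction of the codimension-1 spherical Hausdorff measure at
scale `δ`: the least ratio `μ B / r` over balls `B ⊇ s` of radius `r ≤ δ`. It is extended from
balls to all sets so that `OuterMeasure.boundedBy` applies to it. -/
noncomputable def ballGauge (μ : Measure X) (δ : ℝ) (s : Set X) : ℝ≥0∞ :=
  ⨅ (c : X) (r : ℝ) (_ : s ⊆ ball c r) (_ : 0 < r ∧ r ≤ δ), μ (ball c r) / ENNReal.ofReal r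

theorem ballGauge_le {s : Set X} {c : X} {r : ℝ} (hs : s ⊆ ball c r) (hr : 0 < r) (hrδ : r ≤ δ) :
    ballGauge μ δ s ≤ μ (ball c r) / ENNReal.ofReal r :=
  (iInf₂_le c r).trans (iInf₂_le hs ⟨hr, hrδ⟩)

theorem ballGauge_anti (h : δ ≤ δ') (s : Set X) : ballGauge μ δ' s ≤ ballGauge μ δ s :=
  le_iInf₂ fun _ _ => le_iInf₂ fun hs hr => ballGauge_le hs hr.1 (hr.2.trans h)

theorem exists_ball_of_ballGauge_lt {s : Set X} {a : ℝ≥0∞} (h : ballGauge μ δ s < a) :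
    ∃ (c : X) (r : ℝ), s ⊆ ball c r ∧ (0 < r ∧ r ≤ δ) ∧ μ (ball c r) / ENNReal.ofReal r < a := by
  simpa only [ballGauge, iInf_lt_iff, exists_prop] using h

theorem ballGauge_eq_top_of_two_mul_lt_dist {s : Set X} {x y : X} (hx : x ∈ s) (hy : y ∈ s)
    (hxy : 2 * δ < dist x y) : ballGauge μ δ s = ⊤ := by
  refine top_unique (le_iInf₂ fun c r => le_iInf₂ fun hs hr => ?_)
  have := dist_triangle_right x y c
  linarith [mem_ball.1 (hs hx), mem_ball.1 (hs hy)]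

/-- The outer measure generated by the ball gauges as the scale tends to `0`. It agrees with
`codimOneHausdorff μ` wherever the latter is finite; the latter need not vanish on `∅` when there
are no balls with small ratio `μ B / r`. -/
noncomputable def codimOneOuterMeasure (μ : Measure X) : OuterMeasure X :=
  ⨆ (δ : ℝ) (_ : 0 < δ), OuterMeasure.boundedBy (ballGauge μ δ)

theorem codimOneOuterMeasure_apply (μ : Measure X) (A : Set X) :
    codimOneOuterMeasure μ A =
      ⨆ (δ : ℝ) (_ : 0 < δ), OuterMeasure.boundedBy (ballGauge μ δ) A := by
  simp only [codimOneOuterMeasure, OuterMeasure.iSup_apply]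

theorem codimOneOuterMeasure_isMetric (μ : Measure X) : (codimOneOuterMeasure μ).IsMetric := by
  rintro s t ⟨R, hR, hst⟩
  refine le_antisymm (measure_union_le _ _) ?_
  obtain ⟨ρ, hρ, hρR⟩ : ∃ ρ : ℝ, 0 < ρ ∧ ENNReal.ofReal ρ ≤ R := by
    obtain ⟨ρ, hρ, hρR⟩ := ENNReal.lt_iff_exists_nnreal_btwn.1 (pos_iff_ne_zero.2 hR)
    exact ⟨ρ, by exact_mod_cast hρ, by simpa using hρR.le⟩
  simp only [codimOneOuterMeasure_apply]
  refine ENNReal.biSup_add_biSup_le' ⟨1, one_pos⟩ ⟨1, one_pos⟩ fun δ hδ δ' hδ' => ?_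
  set ε := min (min δ δ') (ρ / 3)
  have hε : 0 < ε := by positivity
  have hsep : OuterMeasure.boundedBy (ballGauge μ ε) (s ∪ t) =
      OuterMeasure.boundedBy (ballGauge μ ε) s + OuterMeasure.boundedBy (ballGauge μ ε) t := by
    refine OuterMeasure.boundedBy_union_of_top_of_nonempty_inter ?_
    rintro u ⟨x, hxs, hxu⟩ ⟨y, hyt, hyu⟩
    refine ballGauge_eq_top_of_two_mul_lt_dist hxu hyu ?_
    have hρxy : ρ ≤ dist x y := by
      rw [← ENNReal.ofReal_le_ofReal_iff dist_nonneg, ← edist_dist]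
      exact hρR.trans (hst x hxs y hyt)
    linarith [min_le_right (min δ δ') (ρ / 3)]
  have hmono {η : ℝ} (hη : ε ≤ η) (B : Set X) :
      OuterMeasure.boundedBy (ballGauge μ η) B ≤ OuterMeasure.boundedBy (ballGauge μ ε) B :=
    OuterMeasure.le_boundedBy.2
      (fun u => (OuterMeasure.boundedBy_le u).trans (ballGauge_anti hη u)) B
  calc _ ≤ OuterMeasure.boundedBy (ballGauge μ ε) s + OuterMeasure.boundedBy (ballGauge μ ε) t :=
        add_le_add (hmono ((min_le_left _ _).trans (min_le_left _ _)) s)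
          (hmono ((min_le_left _ _).trans (min_le_right _ _)) t)
    _ = OuterMeasure.boundedBy (ballGauge μ ε) (s ∪ t) := hsep.symm
    _ ≤ _ := le_iSup₂_of_le ε hε le_rfl

theorem exists_ball_cover_of_codimOneHausdorff_lt {a : ℝ≥0∞} (h : codimOneHausdorff μ A < a)
    (hδ : 0 < δ) :
    ∃ (c : ℕ → X) (r : ℕ → ℝ), A ⊆ ⋃ i, ball (c i) (r i) ∧ (∀ i, 0 < r i ∧ r i ≤ δ) ∧
      ∑' i, μ (ball (c i) (r i)) / ENNReal.ofReal (r i) < a := by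
  simpa only [iInf_lt_iff, exists_prop] using (le_iSup₂ (α := ℝ≥0∞) δ hδ).trans_lt h

theorem ballGauge_empty_of_codimOneHausdorff_ne_top (h : codimOneHausdorff μ A ≠ ⊤) (hδ : 0 < δ) :
    ballGauge μ δ ∅ = 0 := by
  obtain ⟨c, r, -, hr, hlt⟩ := exists_ball_cover_of_codimOneHausdorff_lt h.lt_top hδ
  exact le_antisymm (ge_of_tendsto' (ENNReal.tendsto_atTop_zero_of_tsum_ne_top hlt.ne) fun i =>
    ballGauge_le (empty_subset _) (hr i).1 (hr i).2) zero_le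

theorem exists_ball_cover_of_tsum_ballGauge {t : ℕ → Set X} {ε : ℝ≥0∞} (hε : ε ≠ 0)
    (ht : ∑' i, ballGauge μ δ (t i) ≠ ⊤) :
    ∃ (c : ℕ → X) (r : ℕ → ℝ), (∀ i, t i ⊆ ball (c i) (r i)) ∧ (∀ i, 0 < r i ∧ r i ≤ δ) ∧
      ∑' i, μ (ball (c i) (r i)) / ENNReal.ofReal (r i) ≤ ∑' i, ballGauge μ δ (t i) + ε := by
  obtain ⟨e, he, hesum⟩ := ENNReal.exists_pos_sum_of_countable' hε ℕ
  choose c r hsub hr hlt using fun i => exists_ball_of_ballGauge_lt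
    (ENNReal.lt_add_right (ENNReal.ne_top_of_tsum_ne_top ht i) (he i).ne')
  refine ⟨c, r, hsub, hr, ?_⟩
  calc ∑' i, μ (ball (c i) (r i)) / ENNReal.ofReal (r i)
      ≤ ∑' i, (ballGauge μ δ (t i) + e i) := ENNReal.tsum_le_tsum fun i => (hlt i).le
    _ ≤ _ := by rw [ENNReal.tsum_add]; gcongr

theorem codimOneOuterMeasure_eq_codimOneHausdorff (h : codimOneHausdorff μ A ≠ ⊤) :
    codimOneOuterMeasure μ A = codimOneHausdorff μ A := by
  rw [codimOneOuterMeasure_apply]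
  refine iSup_congr fun δ => iSup_congr fun hδ => le_antisymm ?_ ?_
  · refine le_iInf₂ fun c r => le_iInf₂ fun hA hr => ?_
    calc OuterMeasure.boundedBy (ballGauge μ δ) A
        ≤ ∑' i, OuterMeasure.boundedBy (ballGauge μ δ) (ball (c i) (r i)) :=
          (measure_mono hA).trans (measure_iUnion_le _)
      _ ≤ _ := ENNReal.tsum_le_tsum fun i =>
          (OuterMeasure.boundedBy_le _).trans (ballGauge_le subset_rfl (hr i).1 (hr i).2)
  · rw [OuterMeasure.boundedBy_eq_ofFunction (ballGauge_empty_of_codimOneHausdorff_ne_top h hδ),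
      OuterMeasure.ofFunction_apply]
    refine le_iInf₂ fun t hA => ?_
    by_cases ht : ∑' i, ballGauge μ δ (t i) = ⊤
    · exact ht ▸ le_top
    refine _root_.le_of_forall_pos_le_add fun ε hε => ?_
    obtain ⟨c, r, hsub, hr, hle⟩ := exists_ball_cover_of_tsum_ballGauge hε.ne' ht
    exact (iInf₂_le c r).trans
      ((iInf₂_le (hA.trans (iUnion_mono hsub)) hr).trans hle)

theorem codimOneHausdorff_mono {B : Set X} (hAB : A ⊆ B) :
    codimOneHausdorff μ A ≤ codimOneHausdorff μ B :=
  iSup₂_mono fun _ _ => iInf₂_mono fun _ _ => le_iInf₂ fun hB hr => iInf₂_le (hAB.trans hB) hr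

end OuterMeasure

theorem measure_Ioi_inter_ofReal_lt (a : ℝ≥0∞) :
    volume (Ioi (0 : ℝ) ∩ {s | ENNReal.ofReal s < a}) = a := by
  rcases eq_or_ne a ⊤ with rfl | ha
  · simp
  · have : Ioi (0 : ℝ) ∩ {s | ENNReal.ofReal s < a} = Ioo 0 a.toReal := by
      ext s
      exact and_congr_right fun hs => ENNReal.ofReal_lt_iff_lt_toReal hs.le ha
    rw [this, Real.volume_Ioo, sub_zero, ENNReal.ofReal_toReal ha]

theorem lintegral_eq_lintegral_measure_ofReal_lt (ν : Measure X) [SFinite ν] {g : X → ℝ≥0∞}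
    (hg : Measurable g) :
    ∫⁻ x, g x ∂ν = ∫⁻ s in Ioi (0 : ℝ), ν {x | ENNReal.ofReal s < g x} := by
  let D : Set (X × ℝ) := {q | ENNReal.ofReal q.2 < g q.1}
  have hD : MeasurableSet D :=
    measurableSet_lt (ENNReal.measurable_ofReal.comp measurable_snd) (hg.comp measurable_fst)
  calc ∫⁻ x, g x ∂ν = ∫⁻ x, volume.restrict (Ioi (0 : ℝ)) (Prod.mk x ⁻¹' D) ∂ν := by
        refine lintegral_congr fun x => ?_
        rw [Measure.restrict_apply (measurable_prodMk_left hD), inter_comm]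
        exact (measure_Ioi_inter_ofReal_lt (g x)).symm
    _ = ν.prod (volume.restrict (Ioi (0 : ℝ))) D := (Measure.prod_apply hD).symm
    _ = _ := Measure.prod_apply_symm hD

variable [MetricSpace X] [BorelSpace X] {μ : Measure X} {A : Set X}

/-- The codimension-1 spherical Hausdorff measure as a Borel measure. -/
noncomputable def codimOneMeasure (μ : Measure X) : Measure X :=
  (codimOneOuterMeasure μ).toMeasure
    (BorelSpace.measurable_eq.trans_le (codimOneOuterMeasure_isMetric μ).borel_le_caratheodory)

theorem codimOneMeasure_apply (hA : MeasurableSet A) (hfin : codimOneHausdorff μ A ≠ ⊤) :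
    codimOneMeasure μ A = codimOneHausdorff μ A :=
  (toMeasure_apply _ _ hA).trans (codimOneOuterMeasure_eq_codimOneHausdorff hfin)

theorem isFiniteMeasure_codimOneMeasure_restrict (hA : MeasurableSet A)
    (hfin : codimOneHausdorff μ A ≠ ⊤) : IsFiniteMeasure ((codimOneMeasure μ).restrict A) :=
  ⟨by rw [Measure.restrict_apply_univ, codimOneMeasure_apply hA hfin]; exact hfin.lt_top⟩

theorem codimIntegral_eq_setLIntegral (hA : MeasurableSet A) (hfin : codimOneHausdorff μ A ≠ ⊤)
    {g : X → ℝ≥0∞} (hg : Measurable g) :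
    codimIntegral μ A g = ∫⁻ x in A, g x ∂codimOneMeasure μ := by
  have := isFiniteMeasure_codimOneMeasure_restrict hA hfin
  rw [lintegral_eq_lintegral_measure_ofReal_lt _ hg]
  refine lintegral_congr fun s => ?_
  have hm : MeasurableSet {x | ENNReal.ofReal s < g x} := measurableSet_lt measurable_const hg
  rw [Measure.restrict_apply hm, inter_comm _ A, codimOneMeasure_apply (hA.inter hm)]
  exact ne_top_of_le_ne_top hfin (codimOneHausdorff_mono inter_subset_left)

end CodimensionOneMeasure

section PowerInequalities

theorem iSup_rpow_le_tsum_rpow {ι : Type*} {p : ℝ} (hp : 0 < p) (a : ι → ℝ≥0∞) :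
    (⨆ i, a i) ^ p ≤ ∑' i, a i ^ p :=
  (ENNReal.le_rpow_inv_iff hp).1 <| iSup_le fun i =>
    (ENNReal.le_rpow_inv_iff hp).2 (ENNReal.le_tsum i)

theorem tsum_le_iSup_two_pow_mul (a : ℕ → ℝ≥0∞) : ∑' n, a n ≤ ⨆ n, 2 ^ (n + 1) * a n := by
  calc ∑' n, a n = ∑' n : ℕ, (2⁻¹ : ℝ≥0∞) ^ (n + 1) * (2 ^ (n + 1) * a n) := by
        refine tsum_congr fun n => ?_
        rw [← mul_assoc, ← mul_pow, ENNReal.inv_mul_cancel (by simp) (by simp), one_pow, one_mul]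
    _ ≤ ∑' n : ℕ, (2⁻¹ : ℝ≥0∞) ^ (n + 1) * ⨆ m, 2 ^ (m + 1) * a m := by
        gcongr with n
        exact le_iSup (fun m => 2 ^ (m + 1) * a m) n
    _ = ⨆ n, 2 ^ (n + 1) * a n := by
        rw [ENNReal.tsum_mul_right, ENNReal.tsum_geometric_add_one, ENNReal.one_sub_inv_two,
          ENNReal.mul_inv_cancel (by simp) (by simp), one_mul]

theorem add_rpow_le_two_rpow_mul {p : ℝ} (hp : 0 ≤ p) (a b : ℝ≥0∞) :
    (a + b) ^ p ≤ 2 ^ p * (a ^ p + b ^ p) := by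
  have hmax : (max a b) ^ p ≤ a ^ p + b ^ p := by
    rcases max_choice a b with h | h <;> rw [h]
    exacts [le_self_add, le_add_self]
  calc (a + b) ^ p ≤ (2 * max a b) ^ p := by
        rw [two_mul]
        gcongr
        exacts [le_max_left _ _, le_max_right _ _]
    _ = 2 ^ p * (max a b) ^ p := ENNReal.mul_rpow_of_nonneg _ _ hp
    _ ≤ _ := by gcongr

theorem add_rpow_le_rpow_add_mul_rpow_sub_one_mul {p : ℝ} (hp : 1 < p) (a b : ℝ≥0∞) :
    (a + b) ^ p ≤ a ^ p + ENNReal.ofReal p * ((a + b) ^ (p - 1) * b) := by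
  have hp0 : 0 < p := one_pos.trans hp
  have hp1 : 0 < p - 1 := sub_pos.2 hp
  rcases eq_or_ne a ⊤ with rfl | ha
  · simp [ENNReal.top_rpow_of_pos hp0]
  rcases eq_or_ne b ⊤ with rfl | hb
  · simp [ENNReal.top_rpow_of_pos hp1, ENNReal.mul_top, hp0]
  lift a to ℝ≥0 using ha
  lift b to ℝ≥0 using hb
  suffices h : (a + b) ^ p ≤ a ^ p + p.toNNReal * ((a + b) ^ (p - 1) * b) by
    have := ENNReal.coe_le_coe.2 h
    rwa [ENNReal.coe_add, ENNReal.coe_mul, ENNReal.coe_mul, ENNReal.coe_rpow_of_nonneg _ hp0.le,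
      ENNReal.coe_rpow_of_nonneg _ hp0.le, ENNReal.coe_rpow_of_nonneg _ hp1.le,
      ENNReal.coe_add] at this
  rcases eq_or_ne (a + b) 0 with hx | hx
  · simp [hx, NNReal.zero_rpow hp0.ne']
  rw [← NNReal.coe_le_coe]
  push_cast
  rw [Real.coe_toNNReal p hp0.le]
  have hx' : (0 : ℝ) < a + b := by exact_mod_cast pos_iff_ne_zero.2 hx
  have hb' : (b : ℝ) / (a + b) ≤ 1 := by rw [div_le_one hx']; linarith [a.coe_nonneg]
  have bernoulli := one_add_mul_self_le_rpow_one_add (s := -(b / (a + b) : ℝ)) (by linarith) hp.le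
  rw [show 1 + -(b / (a + b) : ℝ) = a / (a + b) by field_simp; ring,
    Real.div_rpow a.coe_nonneg hx'.le, le_div_iff₀ (by positivity)] at bernoulli
  have hpow : ((a + b : ℝ)) ^ p = (a + b) ^ (p - 1) * (a + b) := by
    rw [← Real.rpow_add_one hx'.ne', sub_add_cancel]
  have expand : (1 + p * -(b / (a + b) : ℝ)) * (a + b) ^ p =
      (a + b) ^ p - p * ((a + b) ^ (p - 1) * b) := by
    rw [hpow]; field_simp; ring
  linarith

theorem exists_pos_forall_le_mul_of_isCompact {α : Type*} [TopologicalSpace α] {K : Set α}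
    (hK : IsCompact K) {f g : α → ℝ} (hf : Continuous f) (hg : Continuous g)
    (hg0 : ∀ x ∈ K, 0 ≤ g x) (hpos : ∀ x ∈ K, 0 ≤ f x → 0 < g x) :
    ∃ C > 0, ∀ x ∈ K, f x ≤ C * g x := by
  have hgpos : ∀ x ∈ K ∩ {x | 0 ≤ f x}, 0 < g x := fun x hx => hpos x hx.1 hx.2
  obtain ⟨B, hB⟩ := (hK.inter_right (isClosed_le continuous_const hf)).bddAbove_image
    (hf.continuousOn.div hg.continuousOn fun x hx => (hgpos x hx).ne')
  refine ⟨max B 1, by positivity, fun x hx => ?_⟩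
  rcases le_or_gt 0 (f x) with hfx | hfx
  · rw [← div_le_iff₀ (hpos x hx hfx)]
    exact (hB (mem_image_of_mem _ ⟨hx, hfx⟩)).trans (le_max_left _ _)
  · exact hfx.le.trans (mul_nonneg (by positivity) (hg0 x hx))

theorem midpoint_rpow_lt {p a b : ℝ} (hp : 1 < p) (ha : 0 ≤ a) (hb : 0 ≤ b) (hab : a ≠ b) :
    ((a + b) / 2) ^ p < (a ^ p + b ^ p) / 2 := by
  have := (strictConvexOn_rpow hp).2 ha hb hab one_half_pos one_half_pos (add_halves 1)
  simp only [smul_eq_mul] at this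
  calc ((a + b) / 2) ^ p = (1 / 2 * a + 1 / 2 * b) ^ p := by ring_nf
    _ < _ := this
    _ = _ := by ring

/-- Uniform convexity of `t ↦ t ^ p`: the error `|a - b| ^ p` is controlled by the convexity
defect at the midpoint. By homogeneity it suffices to bound it on the compact segment
`a + b = 1`. -/
theorem exists_abs_sub_rpow_le_mul_midpoint_defect {p ε : ℝ} (hp : 1 < p) (hε : 0 < ε) :
    ∃ C > 0, ∀ a b : ℝ, 0 ≤ a → 0 ≤ b →
      |a - b| ^ p ≤ ε * (a ^ p + b ^ p) + C * ((a ^ p + b ^ p) / 2 - ((a + b) / 2) ^ p) := by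
  have hp0 : 0 < p := one_pos.trans hp
  have hpow : Continuous fun t : ℝ => t ^ p := Real.continuous_rpow_const hp0.le
  have hsub : Continuous fun t : ℝ => 1 - t := continuous_const.sub continuous_id
  have hsum : Continuous fun t : ℝ => t ^ p + (1 - t) ^ p := hpow.add (hpow.comp hsub)
  obtain ⟨C, hC, hle⟩ := exists_pos_forall_le_mul_of_isCompact
    (isCompact_Icc (a := (0 : ℝ)) (b := 1))
    (f := fun t => |t - (1 - t)| ^ p - ε * (t ^ p + (1 - t) ^ p))
    (g := fun t => (t ^ p + (1 - t) ^ p) / 2 - ((t + (1 - t)) / 2) ^ p)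
    ((hpow.comp (continuous_id.sub hsub).abs).sub (hsum.const_mul ε))
    ((hsum.div_const 2).sub (hpow.comp ((continuous_id.add hsub).div_const 2)))
    (fun t ht => by
      rcases eq_or_ne t (1 - t) with h | h
      · rw [← h]; simp
      · exact (sub_pos.2 (midpoint_rpow_lt hp ht.1 (sub_nonneg.2 ht.2) h)).le)
    (fun t ht hf => by
      refine sub_pos.2 (midpoint_rpow_lt hp ht.1 (sub_nonneg.2 ht.2) fun h => ?_)
      have ht0 : 0 < t := by linarith
      rw [← h, sub_self, abs_zero, Real.zero_rpow hp0.ne'] at hf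
      have : 0 < ε * (t ^ p + t ^ p) := by positivity
      linarith)
  refine ⟨C, hC, fun a b ha hb => ?_⟩
  rcases (add_nonneg ha hb).eq_or_lt with h0 | hs
  · obtain ⟨rfl, rfl⟩ : a = 0 ∧ b = 0 := ⟨by linarith, by linarith⟩
    simp [Real.zero_rpow hp0.ne']
  set s := a + b
  set t := a / s
  have hat : a = s * t := (mul_div_cancel₀ a hs.ne').symm
  have hbt : b = s * (1 - t) := by rw [mul_sub, ← hat, mul_one]; ring
  have ht : t ∈ Icc (0 : ℝ) 1 := ⟨by positivity, (div_le_one hs).2 (le_add_of_nonneg_right hb)⟩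
  have hscaled := mul_le_mul_of_nonneg_left (hle t ht) (Real.rpow_nonneg hs.le p)
  have habs : |a - b| ^ p = s ^ p * |t - (1 - t)| ^ p := by
    rw [← Real.mul_rpow hs.le (abs_nonneg _), hat, hbt, ← mul_sub, abs_mul, abs_of_pos hs]
  have hmid : (s / 2) ^ p = s ^ p * ((t + (1 - t)) / 2) ^ p := by
    rw [← Real.mul_rpow hs.le (by norm_num)]; ring_nf
  rw [habs, hmid, hat, hbt, Real.mul_rpow hs.le ht.1, Real.mul_rpow hs.le (sub_nonneg.2 ht.2)]
  linarith

theorem exists_tsub_rpow_add_mul_midpoint_rpow_le {p : ℝ} (hp : 1 < p) {ε : ℝ≥0} (hε : 0 < ε) :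
    ∃ C : ℝ≥0, ∀ a b : ℝ≥0∞,
      (a - b) ^ p + C * ((a + b) / 2) ^ p ≤ (ε + C / 2) * (a ^ p + b ^ p) := by
  have hp0 : 0 < p := one_pos.trans hp
  obtain ⟨C, hC, hle⟩ := exists_abs_sub_rpow_le_mul_midpoint_defect hp (NNReal.coe_pos.2 hε)
  lift C to ℝ≥0 using hC.le
  refine ⟨C, fun a b => ?_⟩
  have hne : (ε + C / 2 : ℝ≥0∞) ≠ 0 := by simp [hε.ne']
  rcases eq_or_ne a ⊤ with rfl | ha
  · simp [ENNReal.top_rpow_of_pos hp0, ENNReal.mul_top hne]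
  rcases eq_or_ne b ⊤ with rfl | hb
  · simp [ENNReal.top_rpow_of_pos hp0, ENNReal.mul_top hne]
  lift a to ℝ≥0 using ha
  lift b to ℝ≥0 using hb
  have key : (a - b) ^ p + C * ((a + b) / 2) ^ p ≤ (ε + C / 2) * (a ^ p + b ^ p) := by
    rw [← NNReal.coe_le_coe]
    push_cast [NNReal.coe_sub_def]
    have hsub : (max ((a : ℝ) - b) 0) ^ p ≤ |(a : ℝ) - b| ^ p := by
      gcongr
      exact max_le (le_abs_self _) (abs_nonneg _)
    linarith [hle a b a.coe_nonneg b.coe_nonneg]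
  have := ENNReal.coe_le_coe.2 key
  push_cast [ENNReal.coe_rpow_of_nonneg _ hp0.le] at this
  simpa using this

end PowerInequalities

section Modulus

variable {X : Type*} [MeasurableSpace X] {μ : Measure X} {p : ℝ} {M : Set (Measure X)}

theorem modulus_mono {M' : Set (Measure X)} (h : M ⊆ M') : modulus μ p M ≤ modulus μ p M' :=
  le_iInf₂ fun ρ hρ => iInf₂_le ρ ⟨hρ.1, fun ν hν => hρ.2 ν (h hν)⟩

theorem modulus_le_lintegral {ρ : X → ℝ≥0∞} (hρ : Admissible M ρ) :
    modulus μ p M ≤ ∫⁻ x, ρ x ^ p ∂μ :=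
  iInf₂_le ρ hρ

theorem exists_admissible_lintegral_lt {a : ℝ≥0∞} (h : modulus μ p M < a) :
    ∃ ρ, Admissible M ρ ∧ ∫⁻ x, ρ x ^ p ∂μ < a := by
  simpa only [modulus, iInf_lt_iff, exists_prop] using h

theorem modulus_iUnion_eq_zero (hp : 0 < p) {M : ℕ → Set (Measure X)}
    (h : ∀ n, modulus μ p (M n) = 0) : modulus μ p (⋃ n, M n) = 0 := by
  refine le_antisymm (_root_.le_of_forall_pos_le_add fun ε hε => ?_) zero_le
  obtain ⟨ε', hε', hsum⟩ := ENNReal.exists_pos_sum_of_countable' hε.ne' ℕ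
  choose ρ hρ hlt using fun n => exists_admissible_lintegral_lt ((h n).trans_lt (hε' n))
  have hsup : Admissible (⋃ n, M n) fun x => ⨆ n, ρ n x := by
    refine ⟨Measurable.iSup fun n => (hρ n).1, fun ν hν => ?_⟩
    obtain ⟨n, hn⟩ := mem_iUnion.1 hν
    exact ((hρ n).2 ν hn).trans (lintegral_mono fun x => le_iSup (fun n => ρ n x) n)
  calc modulus μ p (⋃ n, M n) ≤ ∫⁻ x, (⨆ n, ρ n x) ^ p ∂μ := modulus_le_lintegral hsup
    _ ≤ ∫⁻ x, ∑' n, ρ n x ^ p ∂μ := lintegral_mono fun x => iSup_rpow_le_tsum_rpow hp _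
    _ = ∑' n, ∫⁻ x, ρ n x ^ p ∂μ := lintegral_tsum fun n => ((hρ n).1.pow_const p).aemeasurable
    _ ≤ ∑' n, ε' n := ENNReal.tsum_le_tsum fun n => (hlt n).le
    _ ≤ 0 + ε := by rw [zero_add]; exact hsum.le

namespace Admissible

theorem convexCombination {a b : X → ℝ≥0∞} (ha : Admissible M a) (hb : Admissible M b)
    {s t : ℝ≥0∞} (hst : s + t = 1) : Admissible M fun x => s * a x + t * b x := by
  refine ⟨(ha.1.const_mul s).add (hb.1.const_mul t), fun ν hν => ?_⟩
  rw [lintegral_add_left (ha.1.const_mul s), lintegral_const_mul _ ha.1, lintegral_const_mul _ hb.1]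
  calc (1 : ℝ≥0∞) = s * 1 + t * 1 := by rw [mul_one, mul_one, hst]
    _ ≤ _ := by gcongr; exacts [ha.2 ν hν, hb.2 ν hν]

theorem midpoint {a b : X → ℝ≥0∞} (ha : Admissible M a) (hb : Admissible M b) :
    Admissible M fun x => (a x + b x) / 2 := by
  simpa only [div_eq_mul_inv, add_mul, mul_comm (2⁻¹ : ℝ≥0∞)] using
    ha.convexCombination hb ENNReal.inv_two_add_inv_two

end Admissible

theorem exists_forall_lintegral_tsub_rpow_le_of_near_minimal (hp : 1 < p)
    (hfin : modulus μ p M ≠ ⊤) {τ : ℝ≥0∞} (hτ : τ ≠ 0) :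
    ∃ s : ℝ≥0∞, s ≠ 0 ∧ ∀ a b, Admissible M a → Admissible M b →
      ∫⁻ x, a x ^ p ∂μ ≤ modulus μ p M + s → ∫⁻ x, b x ^ p ∂μ ≤ modulus μ p M + s →
      ∫⁻ x, (a x - b x) ^ p ∂μ ≤ τ := by
  set m := modulus μ p M
  have hτ2 : τ / 2 ≠ 0 := (ENNReal.half_pos hτ).ne'
  obtain ⟨ε, hε, hετ⟩ := ENNReal.exists_nnreal_pos_mul_lt (a := 2 * m) (by finiteness) hτ2
  obtain ⟨C, hconv⟩ := exists_tsub_rpow_add_mul_midpoint_rpow_le hp hε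
  obtain ⟨s, hs, hsτ⟩ := ENNReal.exists_nnreal_pos_mul_lt
    (b := τ / 2) (a := 2 * ε + C) (by finiteness) hτ2
  refine ⟨s, by simpa using hs.ne', fun a b ha hb ham hbm => ?_⟩
  have hdiff : Measurable fun x => (a x - b x) ^ p := (ha.1.sub hb.1).pow_const p
  have hCm : C * m ≠ ⊤ := ENNReal.mul_ne_top coe_ne_top hfin
  refine (ENNReal.add_le_add_iff_right hCm).1 ?_
  calc ∫⁻ x, (a x - b x) ^ p ∂μ + C * m
      ≤ ∫⁻ x, (a x - b x) ^ p ∂μ + C * ∫⁻ x, ((a x + b x) / 2) ^ p ∂μ := by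
        gcongr
        exact modulus_le_lintegral (ha.midpoint hb)
    _ = ∫⁻ x, ((a x - b x) ^ p + C * ((a x + b x) / 2) ^ p) ∂μ := by
        rw [lintegral_add_left hdiff, lintegral_const_mul _ ((ha.midpoint hb).1.pow_const p)]
    _ ≤ ∫⁻ x, (ε + C / 2) * (a x ^ p + b x ^ p) ∂μ := lintegral_mono fun x => hconv _ _
    _ = (ε + C / 2) * (∫⁻ x, a x ^ p ∂μ + ∫⁻ x, b x ^ p ∂μ) := by
        rw [lintegral_const_mul' _ _ (by finiteness), lintegral_add_left (ha.1.pow_const p)]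
    _ ≤ (ε + C / 2) * (2 * (m + s)) := by
        rw [two_mul]
        gcongr
    _ = ε * (2 * m) + s * (2 * ε + C) + C * m := by
        have hhalf : (C / 2 : ℝ≥0∞) * 2 = C := ENNReal.div_mul_cancel two_ne_zero ofNat_ne_top
        rw [add_mul, ← mul_assoc (_ / _), hhalf]
        ring
    _ ≤ τ + C * m := by
        gcongr
        exact (add_le_add hετ.le hsτ.le).trans_eq (ENNReal.add_halves τ)

theorem lintegral_tsum_rpow_lt_top (hp : 0 < p) {d : ℕ → X → ℝ≥0∞} (hd : ∀ k, Measurable (d k))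
    (h : ∀ k : ℕ, ∫⁻ x, d k x ^ p ∂μ ≤ 2⁻¹ ^ k / (2 ^ (k + 1)) ^ p) :
    ∫⁻ x, (∑' k, d k x) ^ p ∂μ < ⊤ := by
  have hpow0 (k : ℕ) : ((2 : ℝ≥0∞) ^ (k + 1)) ^ p ≠ 0 := by
    rw [Ne, ENNReal.rpow_eq_zero_iff_of_pos hp]
    simp
  have hpowtop (k : ℕ) : ((2 : ℝ≥0∞) ^ (k + 1)) ^ p ≠ ⊤ := by finiteness
  calc ∫⁻ x, (∑' k, d k x) ^ p ∂μ ≤ ∫⁻ x, ∑' k : ℕ, (2 ^ (k + 1)) ^ p * d k x ^ p ∂μ := by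
        refine lintegral_mono fun x => ?_
        refine (ENNReal.rpow_le_rpow (tsum_le_iSup_two_pow_mul _) hp.le).trans ?_
        exact (iSup_rpow_le_tsum_rpow hp _).trans_eq
          (tsum_congr fun k => ENNReal.mul_rpow_of_nonneg _ _ hp.le)
    _ = ∑' k : ℕ, (2 ^ (k + 1)) ^ p * ∫⁻ x, d k x ^ p ∂μ := by
        rw [lintegral_tsum fun k => (((hd k).pow_const p).const_mul _).aemeasurable]
        exact tsum_congr fun k => lintegral_const_mul _ ((hd k).pow_const p)
    _ ≤ ∑' k : ℕ, 2⁻¹ ^ k := by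
        refine ENNReal.tsum_le_tsum fun k => ?_
        rw [mul_comm, ← ENNReal.le_div_iff_mul_le (Or.inl (hpow0 k)) (Or.inl (hpowtop k))]
        exact h k
    _ < ⊤ := by rw [ENNReal.tsum_geometric]; norm_num

theorem le_add_tsum_tsub (a : ℕ → ℝ≥0∞) (n : ℕ) : a n ≤ a 0 + ∑' k, (a (k + 1) - a k) := by
  have telescope : a n ≤ a 0 + ∑ k ∈ Finset.range n, (a (k + 1) - a k) := by
    induction n with
    | zero => simp
    | succ n ih =>
      rw [Finset.sum_range_succ, ← add_assoc]
      exact le_add_tsub.trans (add_le_add_left ih _)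
  exact telescope.trans (add_le_add_right (ENNReal.sum_le_tsum _) _)

theorem exists_dominated_minimizing_seq (hp : 1 < p) (hfin : modulus μ p M ≠ ⊤)
    {e : ℕ → ℝ≥0∞} (he : ∀ n, e n ≠ 0) :
    ∃ (ρ : ℕ → X → ℝ≥0∞) (R : X → ℝ≥0∞), (∀ n, Admissible M (ρ n)) ∧
      (∀ n, ∫⁻ x, ρ n x ^ p ∂μ ≤ modulus μ p M + e n) ∧ (∀ n x, ρ n x ≤ R x) ∧
      Measurable R ∧ ∫⁻ x, R x ^ p ∂μ < ⊤ := by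
  have hp0 : 0 < p := one_pos.trans hp
  choose s hs hclose using fun k : ℕ => exists_forall_lintegral_tsub_rpow_le_of_near_minimal
    hp hfin (τ := 2⁻¹ ^ k / (2 ^ (k + 1)) ^ p)
    (ENNReal.div_ne_zero.2 ⟨by simp, by finiteness⟩)
  choose ρ hρ hlt using fun n => exists_admissible_lintegral_lt (M := M) (μ := μ) (p := p)
    (ENNReal.lt_add_right hfin (lt_min (pos_iff_ne_zero.2 (he n)) (lt_min
      (pos_iff_ne_zero.2 (hs n)) (pos_iff_ne_zero.2 (hs (n - 1))))).ne')
  have hd (k : ℕ) : Measurable fun x => ρ (k + 1) x - ρ k x := (hρ (k + 1)).1.sub (hρ k).1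
  have hdint (k : ℕ) : ∫⁻ x, (ρ (k + 1) x - ρ k x) ^ p ∂μ ≤ 2⁻¹ ^ k / (2 ^ (k + 1)) ^ p :=
    hclose k _ _ (hρ _) (hρ _)
      ((hlt (k + 1)).le.trans
        (add_le_add_right ((min_le_right _ _).trans (min_le_right _ _)) _))
      ((hlt k).le.trans (add_le_add_right ((min_le_right _ _).trans (min_le_left _ _)) _))
  exact ⟨ρ, fun x => ρ 0 x + ∑' k, (ρ (k + 1) x - ρ k x), hρ,
    fun n => (hlt n).le.trans (add_le_add_right (min_le_left _ _) _),
    fun n x => le_add_tsum_tsub (fun k => ρ k x) n, (hρ 0).1.add (Measurable.tsum hd),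
    ENNReal.lintegral_rpow_add_lt_top_of_lintegral_rpow_lt_top (hρ 0).1.aemeasurable
      ((hlt 0).trans_le le_top) (lintegral_tsum_rpow_lt_top hp0 hd hdint) hp.le⟩

theorem convexCombination_rpow_le (hp : 1 < p) {s t r R : ℝ≥0∞} (hst : s + t = 1) (hr : r ≤ R)
    (w : ℝ≥0∞) :
    (s * r + t * w) ^ p ≤
      s * r ^ p + t * (ENNReal.ofReal p * ((R + t * w) ^ (p - 1) * w)) := by
  have hp1 : 0 ≤ p - 1 := sub_nonneg.2 hp.le
  have hs1 : s ≤ 1 := le_self_add.trans_eq hst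
  have hsp : s ^ p ≤ s :=
    (ENNReal.rpow_le_rpow_of_exponent_ge hs1 hp.le).trans_eq (ENNReal.rpow_one _)
  calc (s * r + t * w) ^ p
      ≤ (s * r) ^ p + ENNReal.ofReal p * ((s * r + t * w) ^ (p - 1) * (t * w)) :=
        add_rpow_le_rpow_add_mul_rpow_sub_one_mul hp _ _
    _ ≤ s * r ^ p + ENNReal.ofReal p * ((R + t * w) ^ (p - 1) * (t * w)) := by
        rw [ENNReal.mul_rpow_of_nonneg _ _ (one_pos.trans hp).le]
        gcongr
        exact (mul_le_of_le_one_left' hs1).trans hr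
    _ = _ := by ring

/-- First variation at a near-minimizer `ρ` in the direction of `σ`. -/
theorem modulus_le_add_mul_lintegral_rpow_mul (hp : 1 < p) (hfin : modulus μ p M ≠ ⊤)
    {ρ R σ : X → ℝ≥0∞} (hρ : Admissible M ρ) (hρR : ∀ x, ρ x ≤ R x) (hR : Measurable R)
    (hσ : Admissible M σ) {t : ℝ≥0} (ht : t ≠ 0) (ht1 : t ≤ 1)
    (hmin : ∫⁻ x, ρ x ^ p ∂μ ≤ modulus μ p M + t * t) :
    modulus μ p M ≤ t + ENNReal.ofReal p * ∫⁻ x, (R x + t * σ x) ^ (p - 1) * σ x ∂μ := by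
  set m := modulus μ p M
  set I := ∫⁻ x, (R x + t * σ x) ^ (p - 1) * σ x ∂μ
  set t' : ℝ≥0∞ := 1 - t
  have htt' : t' + t = 1 := tsub_add_cancel_of_le (by exact_mod_cast ht1)
  have hvar : t' * m + t * m ≤ t' * m + t * (t + ENNReal.ofReal p * I) := by
    have hRσ : Measurable fun x => (R x + t * σ x) ^ (p - 1) * σ x :=
      ((hR.add (hσ.1.const_mul _)).pow_const _).mul hσ.1
    calc t' * m + t * m = m := by rw [← add_mul, htt', one_mul]
      _ ≤ ∫⁻ x, (t' * ρ x + t * σ x) ^ p ∂μ :=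
          modulus_le_lintegral (hρ.convexCombination hσ htt')
      _ ≤ _ := lintegral_mono fun x => convexCombination_rpow_le hp htt' (hρR x) (σ x)
      _ = t' * ∫⁻ x, ρ x ^ p ∂μ + t * (ENNReal.ofReal p * I) := by
          rw [lintegral_add_left ((hρ.1.pow_const p).const_mul _),
            lintegral_const_mul _ (hρ.1.pow_const p), lintegral_const_mul _ (hRσ.const_mul _),
            lintegral_const_mul _ hRσ]
      _ ≤ t' * m + t * t + t * (ENNReal.ofReal p * I) := by
          gcongr
          refine (mul_le_mul_right hmin _).trans ?_
          rw [mul_add]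
          exact add_le_add_right (mul_le_of_le_one_left' tsub_le_self) _
      _ = _ := by ring
  have ht'm : t' * m ≠ ⊤ := ENNReal.mul_ne_top (by finiteness) hfin
  exact (ENNReal.mul_le_mul_iff_right (by simpa using ht) coe_ne_top).1
    ((ENNReal.add_le_add_iff_left ht'm).1 hvar)

theorem lintegral_add_mul_rpow_sub_one_mul_le (hp : 1 ≤ p) {R σ : X → ℝ≥0∞} (hR : Measurable R)
    (hσ : Measurable σ) (t : ℝ≥0∞) :
    ∫⁻ x, (R x + t * σ x) ^ (p - 1) * σ x ∂μ ≤
      2 ^ (p - 1) * (∫⁻ x, R x ^ (p - 1) * σ x ∂μ + t ^ (p - 1) * ∫⁻ x, σ x ^ p ∂μ) := by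
  have hp1 : 0 ≤ p - 1 := sub_nonneg.2 hp
  have hRσ : Measurable fun x => R x ^ (p - 1) * σ x := (hR.pow_const _).mul hσ
  rw [← lintegral_const_mul _ (hσ.pow_const p), ← lintegral_add_left hRσ,
    ← lintegral_const_mul' _ _ (by finiteness)]
  refine lintegral_mono fun x => ?_
  have hpow : σ x ^ p = σ x ^ (p - 1) * σ x := by
    conv_rhs => rw [← ENNReal.rpow_one (σ x), ← ENNReal.rpow_mul, one_mul,
      ← ENNReal.rpow_add_of_nonneg _ _ hp1 zero_le_one, sub_add_cancel]
  calc (R x + t * σ x) ^ (p - 1) * σ x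
      ≤ 2 ^ (p - 1) * (R x ^ (p - 1) + (t * σ x) ^ (p - 1)) * σ x := by
        gcongr
        exact add_rpow_le_two_rpow_mul hp1 _ _
    _ = _ := by rw [hpow, ENNReal.mul_rpow_of_nonneg _ _ hp1]; ring

theorem exists_dual_of_modulus_ne_zero (hp : 1 < p) (h0 : modulus μ p M ≠ 0)
    (hfin : modulus μ p M ≠ ⊤) :
    ∃ h : X → ℝ≥0∞, Measurable h ∧ ∫⁻ x, h x ^ (p / (p - 1)) ∂μ < ⊤ ∧
      ∃ c ≠ 0, ∀ σ, Admissible M σ → ∫⁻ x, σ x ^ p ∂μ ≠ ⊤ → c ≤ ∫⁻ x, h x * σ x ∂μ := by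
  have hp1 : 0 < p - 1 := sub_pos.2 hp
  let t : ℕ → ℝ≥0 := fun n => 1 / (n + 1)
  have ht0 (n : ℕ) : t n ≠ 0 := by positivity
  have ht1 (n : ℕ) : t n ≤ 1 := div_le_one_of_le₀ (by simp) zero_le
  have htlim : Tendsto (fun n => (t n : ℝ≥0∞)) atTop (𝓝 0) :=
    ENNReal.tendsto_coe.2 (by simpa [t] using tendsto_one_div_add_atTop_nhds_zero_nat (𝕜 := ℝ≥0))
  obtain ⟨ρ, R, hρ, hmin, hρR, hRm, hRint⟩ := exists_dominated_minimizing_seq hp hfin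
    (e := fun n => t n * t n) fun n => by simp [ht0 n]
  set B : ℝ≥0∞ := ENNReal.ofReal p * 2 ^ (p - 1)
  have hB0 : B ≠ 0 := by simp [B, one_pos.trans hp]
  have hBtop : B ≠ ⊤ := by finiteness
  refine ⟨fun x => R x ^ (p - 1), hRm.pow_const _, ?_, modulus μ p M / B,
    ENNReal.div_ne_zero.2 ⟨h0, hBtop⟩, fun σ hσ hσint => ?_⟩
  · simpa only [← ENNReal.rpow_mul, mul_div_cancel₀ p hp1.ne'] using hRint
  rw [ENNReal.div_le_iff_le_mul (Or.inl hB0) (Or.inl hBtop), mul_comm]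
  set S := ∫⁻ x, σ x ^ p ∂μ
  set H := ∫⁻ x, R x ^ (p - 1) * σ x ∂μ
  have hvar (n : ℕ) : modulus μ p M ≤ t n + B * (H + (t n : ℝ≥0∞) ^ (p - 1) * S) := by
    refine (modulus_le_add_mul_lintegral_rpow_mul hp hfin (hρ n) (hρR n) hRm hσ (ht0 n) (ht1 n)
      (hmin n)).trans ?_
    rw [mul_assoc]
    gcongr
    exact lintegral_add_mul_rpow_sub_one_mul_le hp.le hRm hσ.1 _
  have hpowlim : Tendsto (fun n => (t n : ℝ≥0∞) ^ (p - 1)) atTop (𝓝 0) := by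
    simpa [hp1, Function.comp_def] using
      ((ENNReal.continuous_rpow_const (y := p - 1)).tendsto 0).comp htlim
  have hlim := htlim.add (ENNReal.Tendsto.const_mul
    ((tendsto_const_nhds (x := H)).add (ENNReal.Tendsto.mul_const hpowlim (Or.inr hσint)))
    (Or.inr hBtop))
  simpa using ge_of_tendsto' hlim hvar

end Modulus

section Doubling

variable {X : Type*} [MetricSpace X] [MeasurableSpace X] {μ : Measure X} {Cμ : ℝ}

namespace IsDoublingWith

theorem measure_ball_pos (hD : IsDoublingWith μ Cμ) (x : X) {r : ℝ} (hr : 0 < r) :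
    0 < μ (ball x r) := by
  simpa only [mul_div_cancel₀ r two_ne_zero] using (hD x (r / 2) (half_pos hr)).1

theorem measure_ball_ne_top (hD : IsDoublingWith μ Cμ) (x : X) (r : ℝ) : μ (ball x r) ≠ ⊤ := by
  rcases le_or_gt r 0 with hr | hr
  · simp [ball_eq_empty.2 hr]
  · exact (hD x r hr).2.2.ne

theorem exists_measure_ball_mul_le (hD : IsDoublingWith μ Cμ) (A : ℝ) :
    ∃ C : ℝ≥0, ∀ (x : X) (r : ℝ), 0 < r → μ (ball x (A * r)) ≤ C * μ (ball x r) := by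
  have iterate (n : ℕ) (x : X) (r : ℝ) (hr : 0 < r) :
      μ (ball x (2 ^ n * r)) ≤ (Cμ.toNNReal : ℝ≥0∞) ^ n * μ (ball x r) := by
    induction n with
    | zero => simp
    | succ n ih =>
      rw [_root_.pow_succ', mul_assoc, _root_.pow_succ', mul_assoc]
      exact (hD x (2 ^ n * r) (by positivity)).2.1.trans (by gcongr; exact le_rfl)
  obtain ⟨n, hn⟩ := pow_unbounded_of_one_lt A one_lt_two
  refine ⟨Cμ.toNNReal ^ n, fun x r hr => ?_⟩
  rw [ENNReal.coe_pow]
  exact (measure_mono (ball_subset_ball (by gcongr))).trans (iterate n x r hr)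

theorem sigmaFinite (hD : IsDoublingWith μ Cμ) : SigmaFinite μ := by
  rcases isEmpty_or_nonempty X with _ | ⟨⟨x⟩⟩
  · rw [Measure.eq_zero_of_isEmpty μ]
    infer_instance
  · exact ⟨⟨{ set := fun n => ball x n, set_mem := fun _ => trivial,
              finite := fun n => (hD.measure_ball_ne_top x n).lt_top,
              spanning := iUnion_ball_nat x }⟩⟩

theorem isLocallyFiniteMeasure (hD : IsDoublingWith μ Cμ) : IsLocallyFiniteMeasure μ :=
  ⟨fun x => ⟨ball x 1, ball_mem_nhds x one_pos, (hD.measure_ball_ne_top x 1).lt_top⟩⟩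

theorem isOpenPosMeasure (hD : IsDoublingWith μ Cμ) : μ.IsOpenPosMeasure := by
  refine ⟨fun U hU ⟨x, hx⟩ h0 => ?_⟩
  obtain ⟨r, hr, hrU⟩ := Metric.isOpen_iff.1 hU x hx
  exact (hD.measure_ball_pos x hr).ne' (measure_mono_null hrU h0)

theorem countable_of_isSeparated [BorelSpace X] (hD : IsDoublingWith μ Cμ) {ε : ℝ≥0} (hε : 0 < ε)
    {s : Set X} (hs : IsSeparated ε s) : s.Countable := by
  have := hD.sigmaFinite
  have hdisj : Pairwise (Function.onFun Disjoint fun x : s => ball (x : X) (ε / 2)) := by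
    intro x y hxy
    refine ball_disjoint_ball ?_
    have : (ε : ℝ≥0∞) < edist (x : X) y := hs x.2 y.2 (Subtype.coe_injective.ne hxy)
    rw [edist_nndist, ENNReal.coe_lt_coe] at this
    rw [add_halves, dist_nndist]
    exact_mod_cast this.le
  have hcount := Measure.countable_meas_pos_of_disjoint_iUnion (μ := μ)
    (fun x => measurableSet_ball) hdisj
  have huniv : {x : s | 0 < μ (ball (x : X) (ε / 2))} = univ :=
    eq_univ_of_forall fun x => hD.measure_ball_pos _ (by positivity)
  rwa [huniv, countable_univ_iff] at hcount

theorem secondCountableTopology [BorelSpace X] (hD : IsDoublingWith μ Cμ) :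
    SecondCountableTopology X := by
  refine Metric.secondCountable_of_almost_dense_set fun ε hε => ?_
  lift ε to ℝ≥0 using hε.le
  obtain ⟨s, hs⟩ := zorn_subset {s : Set X | IsSeparated (ε : ℝ≥0∞) s} fun c hc hchain =>
    ⟨⋃₀ c, (pairwise_sUnion hchain.directedOn).2 hc, fun s hs => subset_sUnion_of_mem hs⟩
  have hcover : IsCover ε univ s := .of_maximal_isSeparated (by simpa using hs)
  refine ⟨s, hD.countable_of_isSeparated hε hs.1, fun x => ?_⟩
  obtain ⟨y, hy, hxy⟩ := hcover (mem_univ x)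
  exact ⟨y, hy, by rw [dist_nndist]; exact_mod_cast edist_le_coe.1 hxy⟩

end IsDoublingWith

end Doubling

section UpperGradient

theorem measurableSet_inter_preimage_of_continuousOn {α β : Type*} [TopologicalSpace α]
    [MeasurableSpace α] [OpensMeasurableSpace α] [TopologicalSpace β] {f : α → β} {s : Set α}
    (hf : ContinuousOn f s) (hs : MeasurableSet s) {V : Set β} (hV : IsOpen V) :
    MeasurableSet (s ∩ f ⁻¹' V) := by
  obtain ⟨W, hW, hWV⟩ := continuousOn_iff'.1 hf V hV
  rw [inter_comm, hWV]
  exact hW.measurableSet.inter hs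

theorem inter_frontier_nonempty_of_isPreconnected {α : Type*} [TopologicalSpace α]
    {s U : Set α} (hs : IsPreconnected s) {x y : α} (hx : x ∈ s) (hxU : x ∈ U) (hy : y ∈ s)
    (hyU : y ∉ U) : (s ∩ frontier U).Nonempty := by
  by_contra hempty
  have hcover : s ⊆ interior U ∪ interior Uᶜ := fun z hz => by
    by_contra hz'
    rw [interior_compl, mem_union, mem_compl_iff, not_or, not_not] at hz'
    exact hempty ⟨z, hz, hz'.2, hz'.1⟩
  have hdisj : Disjoint (interior U) (interior Uᶜ) :=
    disjoint_compl_right.mono interior_subset interior_subset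
  rcases hs.subset_or_subset isOpen_interior isOpen_interior hdisj hcover with h | h
  · exact hyU (interior_subset (h hy))
  · exact interior_subset (h hx) hxU

theorem ofReal_abs_sub_le_mul_volume_of_lipschitzOnWith {f : ℝ → ℝ} {K : ℝ≥0} {a b : ℝ}
    (hab : a ≤ b) (hf : LipschitzOnWith K f (Icc a b)) {B : Set ℝ} (hB : B ⊆ Icc a b)
    (hzero : ∀ t ∈ Icc a b, t ∉ B → f t = 0) :
    ENNReal.ofReal |f b - f a| ≤ K * volume B := by
  have himage : uIcc (f a) (f b) \ {0} ⊆ f '' B := by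
    rintro v ⟨hv, hv0⟩
    obtain ⟨t, ht, rfl⟩ :=
      intermediate_value_uIcc (hf.continuousOn.mono (uIcc_of_le hab).subset) hv
    rw [uIcc_of_le hab] at ht
    exact ⟨t, by_contra fun htB => hv0 (hzero t ht htB), rfl⟩
  calc ENNReal.ofReal |f b - f a| = volume (uIcc (f a) (f b)) := by rw [Real.volume_interval]
    _ = volume (uIcc (f a) (f b) \ {0}) := (measure_sdiff_null (measure_singleton 0)).symm
    _ ≤ volume (f '' B) := measure_mono himage
    _ ≤ K * volume B := by
      simpa only [hausdorffMeasure_real, ENNReal.rpow_one] using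
        (hf.mono hB).hausdorffMeasure_image_le zero_le_one

variable {X : Type*} [MetricSpace X] {u : X → ℝ} {ρ : X → ℝ≥0∞} {V : Set X} {γ : ℝ → X} {L : ℝ}

namespace IsUpperGradientOn

theorem mono_set (h : IsUpperGradientOn u ρ univ) : IsUpperGradientOn u ρ V :=
  fun L hL γ hγ _ => h L hL γ hγ (mapsTo_univ _ _)

theorem ofReal_abs_sub_le (h : IsUpperGradientOn u ρ V) (hγ : LipschitzOnWith 1 γ (Icc 0 L))
    (hV : MapsTo γ (Icc 0 L) V) {a b : ℝ} (ha : a ∈ Icc 0 L) (hb : b ∈ Icc 0 L) :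
    ENNReal.ofReal |u (γ b) - u (γ a)| ≤ ∫⁻ t in Icc 0 L, ρ (γ t) := by
  wlog hab : a ≤ b generalizing a b
  · rw [abs_sub_comm]
    exact this hb ha (le_of_not_ge hab)
  have hshift : MapsTo (a + ·) (Icc 0 (b - a)) (Icc 0 L) := fun t ht =>
    ⟨add_nonneg ha.1 ht.1, by linarith [ht.2, hb.2]⟩
  have hγ' : LipschitzOnWith 1 (fun t => γ (a + t)) (Icc 0 (b - a)) := by
    simpa [Function.comp_def] using hγ.comp (isometry_add_left a).lipschitz.lipschitzOnWith hshift
  have hab' := h (b - a) (sub_nonneg.2 hab) _ hγ' (hV.comp hshift)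
  rw [add_sub_cancel, add_zero] at hab'
  calc ENNReal.ofReal |u (γ b) - u (γ a)| ≤ ∫⁻ t in Icc 0 (b - a), ρ (γ (a + t)) := hab'
    _ = ∫⁻ t in Icc a b, ρ (γ t) := by
      rw [← (measurePreserving_add_left volume a).setLIntegral_comp_preimage_emb
        (measurableEmbedding_addLeft a) (fun t => ρ (γ t)), preimage_const_add_Icc, sub_self]
    _ ≤ ∫⁻ t in Icc 0 L, ρ (γ t) := lintegral_mono_set (Icc_subset_Icc ha.1 hb.2)

open Classical in
theorem piecewise_top (h : IsUpperGradientOn u ρ V) (hV : IsClosed V) :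
    IsUpperGradientOn u (V.piecewise ρ ⊤) univ := by
  intro L hL γ hγ _
  by_cases hmaps : MapsTo γ (Icc 0 L) V
  · refine (h L hL γ hγ hmaps).trans_eq (setLIntegral_congr_fun measurableSet_Icc fun t ht => ?_)
    rw [piecewise_eq_of_mem _ _ _ (hmaps ht)]
  rcases hL.eq_or_lt with rfl | hL
  · simp
  simp only [MapsTo, not_forall] at hmaps
  obtain ⟨t₀, ht₀, hout⟩ := hmaps
  obtain ⟨W, hW, hWV⟩ := continuousOn_iff'.1 hγ.continuousOn Vᶜ hV.isOpen_compl
  have ht₀W : t₀ ∈ W := (hWV.subset ⟨hout, ht₀⟩).1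
  have hpos : 0 < volume (W ∩ Ioo 0 L) :=
    (hW.inter isOpen_Ioo).measure_pos _
      (mem_closure_iff.1 (by rwa [closure_Ioo hL.ne]) W hW ht₀W)
  have htop : ∫⁻ t in Icc 0 L, V.piecewise ρ ⊤ (γ t) = ⊤ := by
    rw [eq_top_iff]
    calc ⊤ = ∫⁻ _ in W ∩ Ioo 0 L, (⊤ : ℝ≥0∞) := by
          rw [setLIntegral_const, ENNReal.top_mul hpos.ne']
      _ = ∫⁻ t in W ∩ Ioo 0 L, V.piecewise ρ ⊤ (γ t) := by
          refine setLIntegral_congr_fun (hW.inter isOpen_Ioo).measurableSet fun t ht => ?_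
          have htV : γ t ∉ V := (hWV.superset ⟨ht.1, Ioo_subset_Icc_self ht.2⟩).1
          rw [piecewise_eq_of_notMem _ _ _ htV, Pi.top_apply]
      _ ≤ _ := lintegral_mono_set (inter_subset_right.trans Ioo_subset_Icc_self)
  exact htop.symm ▸ le_top

theorem of_lipschitzWith {K : ℝ≥0} (hu : LipschitzWith K u) (hV : IsOpen V)
    (hzero : ∀ x ∉ V, u x = 0) : IsUpperGradientOn u (V.indicator fun _ => (K : ℝ≥0∞)) univ := by
  intro L hL γ hγ _
  have hB := measurableSet_inter_preimage_of_continuousOn hγ.continuousOn measurableSet_Icc hV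
  have hcomp : LipschitzOnWith K (fun t => u (γ t)) (Icc 0 L) := by
    simpa [Function.comp_def] using hu.comp_lipschitzOnWith hγ
  calc ENNReal.ofReal |u (γ L) - u (γ 0)| ≤ K * volume (Icc 0 L ∩ γ ⁻¹' V) :=
        ofReal_abs_sub_le_mul_volume_of_lipschitzOnWith hL hcomp inter_subset_left
          fun t ht htV => hzero _ fun h => htV ⟨ht, h⟩
    _ = ∫⁻ t in Icc 0 L ∩ γ ⁻¹' V, V.indicator (fun _ => (K : ℝ≥0∞)) (γ t) := by
        rw [← setLIntegral_const]
        refine setLIntegral_congr_fun hB fun t ht => ?_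
        rw [indicator_of_mem (mem_preimage.1 ht.2)]
    _ ≤ _ := lintegral_mono_set inter_subset_left

theorem iSup {u : ℕ → X → ℝ} {ρ : ℕ → X → ℝ≥0∞} (h : ∀ j, IsUpperGradientOn (u j) (ρ j) V)
    (hbdd : ∀ x, BddAbove (range fun j => u j x)) :
    IsUpperGradientOn (fun x => ⨆ j, u j x) (fun x => ∑' j, ρ j x) V := by
  intro L hL γ hγ hV
  set I := ∫⁻ t in Icc 0 L, ∑' j, ρ j (γ t)
  rcases eq_or_ne I ⊤ with hI | hI
  · exact hI.symm ▸ le_top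
  have hj (j : ℕ) : |u j (γ L) - u j (γ 0)| ≤ I.toReal :=
    (ENNReal.ofReal_le_iff_le_toReal hI).1 ((h j L hL γ hγ hV).trans
      (lintegral_mono fun t => ENNReal.le_tsum j))
  have hle (x y : X) (hxy : ∀ j, |u j x - u j y| ≤ I.toReal) :
      ⨆ j, u j x ≤ (⨆ j, u j y) + I.toReal :=
    ciSup_le fun j => by linarith [le_ciSup (hbdd y) j, (abs_le.1 (hxy j)).2]
  rw [ENNReal.ofReal_le_iff_le_toReal hI, abs_sub_le_iff]
  constructor
  · linarith [hle _ _ hj]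
  · linarith [hle _ _ fun j => (abs_sub_comm _ _).trans_le (hj j)]

open Classical in
theorem piecewise_one {U : Set X} (h : IsUpperGradientOn u ρ V)
    (hone : ∀ x ∈ frontier U ∩ V, u x = 1) : IsUpperGradientOn (U.piecewise 1 u) ρ V := by
  intro L hL γ hγ hV
  have h0 : (0 : ℝ) ∈ Icc 0 L := left_mem_Icc.2 hL
  have hL' : L ∈ Icc 0 L := right_mem_Icc.2 hL
  have hcross {a b : ℝ} (ha : a ∈ Icc 0 L) (hb : b ∈ Icc 0 L) (haU : γ a ∈ U) (hbU : γ b ∉ U) :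
      ENNReal.ofReal |u (γ b) - 1| ≤ ∫⁻ t in Icc 0 L, ρ (γ t) := by
    obtain ⟨_, ⟨t, ht, rfl⟩, htU⟩ :=
      inter_frontier_nonempty_of_isPreconnected (isPreconnected_Icc.image _ hγ.continuousOn)
        (mem_image_of_mem γ ha) haU (mem_image_of_mem γ hb) hbU
    rw [← hone _ ⟨htU, hV ht⟩]
    exact h.ofReal_abs_sub_le hγ hV ht hb
  by_cases hU0 : γ 0 ∈ U <;> by_cases hUL : γ L ∈ U
  · simp [hU0, hUL]
  · simpa [hU0, hUL] using hcross h0 hL' hU0 hUL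
  · simpa [hU0, hUL, abs_sub_comm] using hcross hL' h0 hUL hU0
  · simpa [hU0, hUL] using h L hL γ hγ hV

theorem zero_of_isClosed_union {A B : Set X} (hA : IsClosed A) (hB : IsClosed B)
    (hAB : Disjoint A B) (hV : V ⊆ A ∪ B) : IsUpperGradientOn (A.indicator 1) 0 V := by
  intro L hL γ hγ hmaps
  have hpre : IsPreconnected (γ '' Icc 0 L) := isPreconnected_Icc.image _ hγ.continuousOn
  have h0 : γ 0 ∈ γ '' Icc 0 L := mem_image_of_mem γ (left_mem_Icc.2 hL)
  have hL' : γ L ∈ γ '' Icc 0 L := mem_image_of_mem γ (right_mem_Icc.2 hL)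
  have hcover : γ '' Icc 0 L ⊆ A ∪ B := (image_subset_iff.2 hmaps).trans hV
  rcases isPreconnected_iff_subset_of_disjoint_closed.1 hpre A B hA hB hcover
    (by rw [hAB.inter_eq, inter_empty]) with h | h
  · simp [h h0, h hL']
  · simp [disjoint_right.1 hAB (h h0), disjoint_right.1 hAB (h hL')]

end IsUpperGradientOn

end UpperGradient

section Poincare

variable {X : Type*} [MetricSpace X] [MeasurableSpace X] [BorelSpace X] {μ : Measure X}
  {Cμ CP lP : ℝ} {u : X → ℝ} {ρ : X → ℝ≥0∞} {x x' : X} {δ R : ℝ}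

theorem abs_setAverage_sub_le {α : Type*} [MeasurableSpace α] {μ : Measure α} {f : α → ℝ}
    {s t : Set α} {C : ℝ≥0} {m : ℝ} (hst : s ⊆ t) (hs : μ s ≠ 0) (ht : μ t ≠ ⊤)
    (hC : μ t ≤ C * μ s) (hf : IntegrableOn f t μ) :
    |⨍ y in s, f y ∂μ - m| ≤ C * ⨍ y in t, |f y - m| ∂μ := by
  have hs' : μ s ≠ ⊤ := measure_ne_top_of_subset hst ht
  have : IsFiniteMeasure (μ.restrict t) := isFiniteMeasure_restrict.2 ht
  have : IsFiniteMeasure (μ.restrict s) := isFiniteMeasure_restrict.2 hs'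
  have : NeZero (μ.restrict s) := ⟨by rwa [Ne, Measure.restrict_eq_zero]⟩
  have hsub : IntegrableOn (fun y => f y - m) t μ := hf.sub (integrable_const m)
  have hposs : 0 < μ.real s := ENNReal.toReal_pos hs hs'
  have hreal : μ.real t ≤ C * μ.real s := by
    simpa [ENNReal.toReal_mul, Measure.real] using
      ENNReal.toReal_mono (ENNReal.mul_ne_top ENNReal.coe_ne_top hs') hC
  have hO : 0 ≤ ⨍ y in t, |f y - m| ∂μ :=
    integral_nonneg fun _ => abs_nonneg _
  refine le_of_mul_le_mul_left ?_ hposs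
  calc μ.real s * |⨍ y in s, f y ∂μ - m| = |∫ y in s, (f y - m) ∂μ| := by
        rw [integral_sub (hf.mono_set hst) (integrable_const m), setIntegral_const,
          ← measure_smul_setAverage f hs', smul_eq_mul, smul_eq_mul, ← mul_sub, abs_mul,
          abs_of_pos hposs]
    _ ≤ ∫ y in s, |f y - m| ∂μ := abs_integral_le_integral_abs
    _ ≤ ∫ y in t, |f y - m| ∂μ :=
        setIntegral_mono_set hsub.abs (.of_forall fun _ => abs_nonneg _) hst.eventuallyLE
    _ = μ.real t * ⨍ y in t, |f y - m| ∂μ := by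
        rw [← measure_smul_setAverage (fun y => |f y - m|) ht, smul_eq_mul]
    _ ≤ μ.real s * (C * ⨍ y in t, |f y - m| ∂μ) := by
        rw [← mul_assoc, mul_comm (μ.real s)]
        gcongr

theorem ofReal_mul_diam_ball_le {Y : Type*} [PseudoMetricSpace Y] {x : Y} {r : ℝ} (c : ℝ)
    (hr : 0 ≤ r) :
    ENNReal.ofReal (c * diam (ball x (2 * r))) ≤ 4 * c.toNNReal * ENNReal.ofReal r := by
  rcases le_or_gt c 0 with hc | hc
  · rw [ENNReal.ofReal_of_nonpos (mul_nonpos_of_nonpos_of_nonneg hc diam_nonneg)]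
    exact zero_le
  calc ENNReal.ofReal (c * diam (ball x (2 * r))) ≤ ENNReal.ofReal (4 * c * r) := by
        refine ENNReal.ofReal_le_ofReal ?_
        nlinarith [diam_ball (x := x) (mul_nonneg zero_le_two hr)]
    _ = 4 * c.toNNReal * ENNReal.ofReal r := by
        rw [ENNReal.ofReal_mul (by positivity), ENNReal.ofReal_mul zero_le_four,
          ENNReal.ofReal_ofNat]
        rfl

namespace WeakPoincare

theorem ofReal_setAverage_le (hPI : WeakPoincare μ 1 CP lP) (hu : LocallyIntegrable u μ)
    (hρ : Measurable ρ) (hR : 0 < R) (hug : IsUpperGradientOn u ρ (closedBall x (lP * R))) :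
    ENNReal.ofReal (⨍ y in ball x R, |u y - ⨍ z in ball x R, u z ∂μ| ∂μ) ≤
      ENNReal.ofReal (CP * diam (ball x R)) * ⨍⁻ y in ball x (lP * R), ρ y ∂μ := by
  classical
  have hPoincare := hPI u hu _ (hρ.piecewise isClosed_closedBall.measurableSet measurable_const)
    (hug.piecewise_top isClosed_closedBall) x R hR
  simp only [ENNReal.rpow_one, div_one] at hPoincare
  refine hPoincare.trans_eq (congrArg _ (setLAverage_congr_fun measurableSet_ball ?_))
  exact fun y hy => piecewise_eq_of_mem _ _ _ (ball_subset_closedBall hy)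

theorem ae_eq_setAverage (hPI : WeakPoincare μ 1 CP lP) (hu : LocallyIntegrable u μ)
    (hint : IntegrableOn u (ball x R) μ) (hfin : μ (ball x R) ≠ ⊤) (hR : 0 < R)
    (hug : IsUpperGradientOn u 0 (closedBall x (lP * R))) :
    ∀ᵐ y ∂μ.restrict (ball x R), u y = ⨍ z in ball x R, u z ∂μ := by
  set m := ⨍ z in ball x R, u z ∂μ
  have : IsFiniteMeasure (μ.restrict (ball x R)) := isFiniteMeasure_restrict.2 hfin
  have hPoincare := hPI.ofReal_setAverage_le hu measurable_zero hR hug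
  have hmean : ⨍ y in ball x R, |u y - m| ∂μ ≤ 0 := by
    simpa [setLAverage_eq] using hPoincare
  have hzero : ∫ y in ball x R, |u y - m| ∂μ = 0 := by
    refine le_antisymm ?_ (integral_nonneg fun _ => abs_nonneg _)
    rw [← measure_smul_setAverage _ hfin]
    exact mul_nonpos_of_nonneg_of_nonpos measureReal_nonneg hmean
  filter_upwards [(integral_eq_zero_iff_of_nonneg (fun _ => abs_nonneg _)
    (hint.sub (integrable_const m)).abs).1 hzero] with y hy
  exact sub_eq_zero.1 (abs_eq_zero.1 hy)

theorem ball_subset_of_isClosed_union (hPI : WeakPoincare μ 1 CP lP) (hD : IsDoublingWith μ Cμ)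
    (hlP : 1 ≤ lP) (hR : 0 < R) {A B : Set X} (hA : IsClosed A) (hB : IsClosed B)
    (hAB : Disjoint A B) (hcover : closedBall x (lP * R) ⊆ A ∪ B) (hx : x ∈ A) :
    ball x R ⊆ A := by
  have := hD.isLocallyFiniteMeasure
  have := hD.isOpenPosMeasure
  have : IsFiniteMeasure (μ.restrict (ball x R)) :=
    isFiniteMeasure_restrict.2 (hD.measure_ball_ne_top x R)
  set u : X → ℝ := A.indicator 1
  have hu : LocallyIntegrable u μ := (locallyIntegrable_const 1).indicator hA.measurableSet
  have hint : IntegrableOn u (ball x R) μ := (integrable_const 1).indicator hA.measurableSet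
  have hconst := hPI.ae_eq_setAverage hu hint (hD.measure_ball_ne_top x R) hR
    (.zero_of_isClosed_union hA hB hAB hcover)
  set m := ⨍ z in ball x R, u z ∂μ
  have hmean {V : Set X} (hV : IsOpen V) (hne : (ball x R ∩ V).Nonempty) :
      ∃ y ∈ ball x R ∩ V, u y = m := by
    by_contra! hcon
    refine (isOpen_ball.inter hV).measure_ne_zero μ hne (measure_mono_null ?_
      ((ae_restrict_iff' measurableSet_ball).1 hconst))
    exact fun y hy hym => hcon y hy (hym hy.1)
  have hsub : ball x R ⊆ A ∪ B := (ball_subset_ball (le_mul_of_one_le_left hR.le hlP)).trans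
    (ball_subset_closedBall.trans hcover)
  by_contra hnot
  obtain ⟨y, hy, hyA⟩ := not_subset.1 hnot
  obtain ⟨a, ⟨haR, haB⟩, ha⟩ := hmean hB.isOpen_compl
    ⟨x, mem_ball_self hR, disjoint_left.1 hAB hx⟩
  obtain ⟨b, ⟨-, hbA⟩, hb⟩ := hmean hA.isOpen_compl ⟨y, hy, hyA⟩
  have haA : a ∈ A := (hsub haR).resolve_right haB
  have : u a = u b := ha.trans hb.symm
  simp [u, haA, notMem_of_mem_compl hbA] at this

theorem ball_subset_connectedComponentIn (hPI : WeakPoincare μ 1 CP lP)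
    (hD : IsDoublingWith μ Cμ) (hlP : 1 ≤ lP) (hR : 0 < R)
    (hcompact : IsCompact (closedBall x (lP * R))) :
    ball x R ⊆ connectedComponentIn (closedBall x (lP * R)) x := by
  set K := closedBall x (lP * R)
  have hxK : x ∈ K := mem_closedBall_self (by positivity)
  have hRK : ball x R ⊆ K :=
    (ball_subset_ball (le_mul_of_one_le_left hR.le hlP)).trans ball_subset_closedBall
  have : CompactSpace K := isCompact_iff_compactSpace.1 hcompact
  intro y hy
  rw [connectedComponentIn_eq_image hxK, connectedComponent_eq_iInter_isClopen]
  refine ⟨⟨y, hRK hy⟩, mem_iInter.2 fun ⟨Z, hZ, hxZ⟩ => ?_, rfl⟩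
  have hclosed {T : Set K} (hT : IsClosed T) : IsClosed ((↑) '' T : Set X) :=
    isClosed_closedBall.isClosedMap_subtype_val _ hT
  have hcover : K ⊆ ((↑) '' Z : Set X) ∪ (↑) '' Zᶜ := by
    rw [← image_union, union_compl_self, image_univ, Subtype.range_coe]
  have hyZ : y ∈ ((↑) '' Z : Set X) :=
    hPI.ball_subset_of_isClosed_union hD hlP hR (hclosed hZ.1) (hclosed hZ.2.isClosed_compl)
      (disjoint_image_of_injective Subtype.coe_injective disjoint_compl_right) hcover
      ⟨_, hxZ, rfl⟩ hy
  obtain ⟨z, hz, rfl⟩ := hyZ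
  exact hz

theorem isOpen_connectedComponentIn (hPI : WeakPoincare μ 1 CP lP) (hD : IsDoublingWith μ Cμ)
    (hlP : 1 ≤ lP) {W K : Set X} (hW : IsOpen W) (hK : IsCompact K) (hWK : W ⊆ K) (x : X) :
    IsOpen (connectedComponentIn W x) := by
  refine Metric.isOpen_iff.2 fun y hy => ?_
  have hyW : y ∈ W := connectedComponentIn_subset W x hy
  obtain ⟨r, hr, hrW⟩ := nhds_basis_closedBall.mem_iff.1 (hW.mem_nhds hyW)
  have hlP0 : 0 < lP := one_pos.trans_le hlP
  have hcancel : lP * (r / lP) = r := mul_div_cancel₀ r hlP0.ne'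
  refine ⟨r / lP, by positivity, ?_⟩
  rw [connectedComponentIn_eq hy]
  refine (hPI.ball_subset_connectedComponentIn hD hlP (by positivity) ?_).trans
    (connectedComponentIn_mono y (hcancel.symm ▸ hrW))
  exact hK.of_isClosed_subset isClosed_closedBall (hcancel.symm ▸ hrW.trans hWK)

theorem exists_setAverage_sub_le (hPI : WeakPoincare μ 1 CP lP) (hD : IsDoublingWith μ Cμ)
    (hlP : 1 ≤ lP) :
    ∃ C : ℝ≥0, ∀ {u : X → ℝ} {ρ : X → ℝ≥0∞} {x x' : X} {δ : ℝ}, LocallyIntegrable u μ →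
      IntegrableOn u (ball x (2 * δ)) μ → Measurable ρ → 0 < δ → dist x' x ≤ δ →
      IsUpperGradientOn u ρ (closedBall x (lP * (2 * δ))) →
      ENNReal.ofReal |⨍ y in ball x δ, u y ∂μ - ⨍ y in ball x' δ, u y ∂μ| ≤
        C * ENNReal.ofReal δ * ((∫⁻ y in ball x (lP * (2 * δ)), ρ y ∂μ) / μ (ball x δ)) := by
  obtain ⟨C, hC⟩ := hD.exists_measure_ball_mul_le 3
  refine ⟨2 * C * (4 * CP.toNNReal), fun {u ρ x x' δ} hu hint hρ hδ hx' hug => ?_⟩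
  have hPoincare := hPI.ofReal_setAverage_le hu hρ (by positivity : 0 < 2 * δ) hug
  set m := ⨍ z in ball x (2 * δ), u z ∂μ
  set osc := ⨍ y in ball x (2 * δ), |u y - m| ∂μ
  have hmean {z : X} (hz : dist z x ≤ δ) : |⨍ y in ball z δ, u y ∂μ - m| ≤ C * osc := by
    refine abs_setAverage_sub_le (ball_subset_ball' (by linarith)) (hD.measure_ball_pos z hδ).ne'
      (hD.measure_ball_ne_top x _) ((measure_mono (ball_subset_ball' ?_)).trans (hC z δ hδ)) hint
    rw [dist_comm]
    linarith
  have hdiff : |⨍ y in ball x δ, u y ∂μ - ⨍ y in ball x' δ, u y ∂μ| ≤ 2 * C * osc := by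
    have := abs_sub_le (⨍ y in ball x δ, u y ∂μ) m (⨍ y in ball x' δ, u y ∂μ)
    rw [abs_sub_comm m] at this
    linarith [hmean (z := x) (by simpa using hδ.le), hmean hx']
  calc ENNReal.ofReal |⨍ y in ball x δ, u y ∂μ - ⨍ y in ball x' δ, u y ∂μ|
      ≤ ENNReal.ofReal (2 * C * osc) := ENNReal.ofReal_le_ofReal hdiff
    _ = 2 * C * ENNReal.ofReal osc := by
        rw [ENNReal.ofReal_mul (by positivity), ENNReal.ofReal_mul zero_le_two]
        simp
    _ ≤ 2 * C * (4 * CP.toNNReal * ENNReal.ofReal δ *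
          ((∫⁻ y in ball x (lP * (2 * δ)), ρ y ∂μ) / μ (ball x δ))) := by
        gcongr
        refine hPoincare.trans (mul_le_mul' (ofReal_mul_diam_ball_le CP hδ.le) ?_)
        rw [setLAverage_eq]
        gcongr
        nlinarith
    _ = _ := by push_cast; ring

end WeakPoincare
end Poincare

section JumpBound

theorem exists_lipschitzWith_eqOn_ball {X : Type*} [PseudoMetricSpace X] (c : X) {r : ℝ}
    (hr : 0 < r) :
    ∃ φ : X → ℝ, LipschitzWith r.toNNReal⁻¹ φ ∧ (∀ x, φ x ∈ Icc 0 1) ∧ EqOn φ 1 (ball c r) ∧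
      ∀ x ∉ ball c (2 * r), φ x = 0 := by
  refine ⟨fun x => thickenedIndicator hr (ball c r) x,
    fun x y => lipschitzWith_thickenedIndicator hr _ x y, fun x => ⟨by positivity, ?_⟩,
    fun x hx => ?_, fun x hx => ?_⟩
  · exact_mod_cast thickenedIndicator_le_one hr _ x
  · simp [thickenedIndicator_one hr _ hx]
  · have : x ∉ thickening r (ball c r) := fun h => hx (by
      simpa only [two_mul] using thickening_ball c r r h)
    simp [thickenedIndicator_zero hr _ this]

variable {X : Type*} [MetricSpace X] [MeasurableSpace X] [BorelSpace X] {μ : Measure X}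
  {Cμ CP lP : ℝ}

theorem lintegral_tsum_indicator_ball_le {C : ℝ≥0}
    (hC : ∀ (x : X) (r : ℝ), 0 < r → μ (ball x (2 * r)) ≤ C * μ (ball x r)) {c : ℕ → X}
    {r : ℕ → ℝ} (hr : ∀ i, 0 < r i) :
    ∫⁻ x, ∑' i, (ball (c i) (2 * r i)).indicator (fun _ => ((r i).toNNReal⁻¹ : ℝ≥0∞)) x ∂μ ≤
      C * ∑' i, μ (ball (c i) (r i)) / ENNReal.ofReal (r i) := by
  rw [lintegral_tsum fun i => (measurable_const.indicator measurableSet_ball).aemeasurable,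
    ← ENNReal.tsum_mul_left]
  refine ENNReal.tsum_le_tsum fun i => ?_
  rw [lintegral_indicator_const measurableSet_ball, mul_comm, div_eq_mul_inv, ← mul_assoc]
  exact mul_le_mul_left (hC _ _ (hr i)) _

theorem exists_isUpperGradientOn_one_on_balls {C : ℝ≥0}
    (hC : ∀ (x : X) (r : ℝ), 0 < r → μ (ball x (2 * r)) ≤ C * μ (ball x r)) {ε : ℝ}
    {c : ℕ → X} {r : ℕ → ℝ} (hr : ∀ i, 0 < r i ∧ r i ≤ ε) :
    ∃ (ψ : X → ℝ) (h : X → ℝ≥0∞), Measurable ψ ∧ Measurable h ∧ (∀ x, ψ x ∈ Icc 0 1) ∧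
      (∀ x ∈ ⋃ i, ball (c i) (r i), ψ x = 1) ∧ IsUpperGradientOn ψ h univ ∧
      ∫⁻ x, h x ∂μ ≤ C * ∑' i, μ (ball (c i) (r i)) / ENNReal.ofReal (r i) ∧
      ∀ x, ENNReal.ofReal (ψ x) ≤ ENNReal.ofReal ε * h x := by
  choose φ hLip hIcc hone hzero using fun i => exists_lipschitzWith_eqOn_ball (c i) (hr i).1
  have hbdd (x : X) : BddAbove (range fun i => φ i x) :=
    ⟨1, forall_mem_range.2 fun i => (hIcc i x).2⟩
  have hψ1 (x : X) : ⨆ i, φ i x ≤ 1 := ciSup_le fun i => (hIcc i x).2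
  refine ⟨fun x => ⨆ i, φ i x,
    fun x => ∑' i, (ball (c i) (2 * r i)).indicator (fun _ => (((r i).toNNReal⁻¹ : ℝ≥0) : ℝ≥0∞)) x,
    .iSup fun i => (hLip i).continuous.measurable,
    .tsum fun i => measurable_const.indicator measurableSet_ball,
    fun x => ⟨(hIcc 0 x).1.trans (le_ciSup (hbdd x) 0), hψ1 x⟩, fun x hx => ?_,
    .iSup (fun i => .of_lipschitzWith (hLip i) isOpen_ball (hzero i)) hbdd, ?_, fun x => ?_⟩
  · obtain ⟨i, hi⟩ := mem_iUnion.1 hx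
    exact (hψ1 x).antisymm ((hone i hi).symm.le.trans (le_ciSup (hbdd x) i))
  · simpa only [ENNReal.coe_inv (Real.toNNReal_pos.2 (hr _).1).ne'] using
      lintegral_tsum_indicator_ball_le hC fun i => (hr i).1
  by_cases hx : ∃ i, x ∈ ball (c i) (2 * r i)
  · obtain ⟨i, hi⟩ := hx
    calc ENNReal.ofReal (⨆ i, φ i x) ≤ 1 := ENNReal.ofReal_le_one.2 (hψ1 x)
      _ = ENNReal.ofReal (r i) * ((r i).toNNReal⁻¹ : ℝ≥0) := by
        rw [ENNReal.ofReal, ← ENNReal.coe_mul,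
          mul_inv_cancel₀ (Real.toNNReal_pos.2 (hr i).1).ne', ENNReal.coe_one]
      _ ≤ _ := by
        refine mul_le_mul' (ENNReal.ofReal_le_ofReal (hr i).2) (le_trans ?_ (ENNReal.le_tsum i))
        rw [indicator_of_mem hi]
  · have : ⨆ i, φ i x ≤ 0 := ciSup_le fun i => (hzero i x fun hi => hx ⟨i, hi⟩).le
    rw [ENNReal.ofReal_of_nonpos this]
    exact zero_le

theorem exists_isUpperGradientOn_approx_indicator {C : ℝ≥0}
    (hC : ∀ (x : X) (r : ℝ), 0 < r → μ (ball x (2 * r)) ≤ C * μ (ball x r)) {U V : Set X}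
    (hU : MeasurableSet U) {a : ℝ≥0∞} (ha : codimOneHausdorff μ (frontier U ∩ V) < a) {ε : ℝ}
    (hε : 0 < ε) :
    ∃ (w : X → ℝ) (h : X → ℝ≥0∞), Measurable w ∧ Measurable h ∧ (∀ x, ‖w x‖ ≤ 1) ∧
      IsUpperGradientOn w h V ∧ ∫⁻ x, h x ∂μ ≤ C * a ∧
      ∀ x, ‖w x - U.indicator 1 x‖ₑ ≤ ENNReal.ofReal ε * h x := by
  classical
  obtain ⟨c, r, hcover, hr, hsum⟩ := exists_ball_cover_of_codimOneHausdorff_lt ha hε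
  obtain ⟨ψ, h, hψ, hh, hIcc, hone, hug, hint, hle⟩ := exists_isUpperGradientOn_one_on_balls hC hr
  refine ⟨U.piecewise 1 ψ, h, measurable_one.piecewise hU hψ, hh, fun x => ?_,
    hug.mono_set.piecewise_one fun x hx => hone x (hcover hx), hint.trans (by gcongr),
    fun x => ?_⟩
  · by_cases hx : x ∈ U
    · simp [hx]
    · simpa [hx, abs_of_nonneg (hIcc x).1] using (hIcc x).2
  · by_cases hx : x ∈ U
    · simp [hx]
    · simpa [hx, Real.enorm_eq_ofReal (hIcc x).1] using hle x

theorem exists_seq_isUpperGradientOn_tendsto_indicator {C : ℝ≥0}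
    (hC : ∀ (x : X) (r : ℝ), 0 < r → μ (ball x (2 * r)) ≤ C * μ (ball x r)) {U V : Set X}
    (hU : MeasurableSet U) (hfin : codimOneHausdorff μ (frontier U ∩ V) ≠ ⊤) :
    ∃ (w : ℕ → X → ℝ) (h : ℕ → X → ℝ≥0∞) (a : ℕ → ℝ≥0∞), (∀ n, Measurable (w n)) ∧
      (∀ n, Measurable (h n)) ∧ (∀ n x, ‖w n x‖ ≤ 1) ∧ (∀ n, IsUpperGradientOn (w n) (h n) V) ∧
      (∀ n, ∫⁻ x, h n x ∂μ ≤ C * a n) ∧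
      Tendsto a atTop (𝓝 (codimOneHausdorff μ (frontier U ∩ V))) ∧
      Tendsto (fun n => ∫⁻ x, ‖w n x - U.indicator 1 x‖ₑ ∂μ) atTop (𝓝 0) := by
  obtain ⟨a, -, haH, hlim⟩ := exists_seq_strictAnti_tendsto' hfin.lt_top
  obtain ⟨ε, -, hε, hεlim⟩ := exists_seq_strictAnti_tendsto (0 : ℝ)
  choose w h hw hh hwle hug hint happrox using fun n =>
    exists_isUpperGradientOn_approx_indicator hC hU (haH n).1 (hε n)
  refine ⟨w, h, a, hw, hh, hwle, hug, hint, hlim, ?_⟩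
  have hbound : Tendsto (fun n => ENNReal.ofReal (ε n) * (C * a n)) atTop (𝓝 0) := by
    have := ENNReal.Tendsto.mul (ENNReal.tendsto_ofReal hεlim)
      (.inr (ENNReal.mul_ne_top (ENNReal.coe_ne_top (r := C)) hfin))
      (ENNReal.Tendsto.const_mul hlim (.inr ENNReal.coe_ne_top)) (.inr (by simp))
    rwa [ENNReal.ofReal_zero, zero_mul] at this
  refine tendsto_of_tendsto_of_tendsto_of_le_of_le tendsto_const_nhds hbound
    (fun _ => zero_le) fun n => ?_
  calc ∫⁻ x, ‖w n x - U.indicator 1 x‖ₑ ∂μ ≤ ∫⁻ x, ENNReal.ofReal (ε n) * h n x ∂μ :=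
        lintegral_mono (happrox n)
    _ = ENNReal.ofReal (ε n) * ∫⁻ x, h n x ∂μ := lintegral_const_mul _ (hh n)
    _ ≤ _ := by gcongr; exact hint n

theorem WeakPoincare.exists_setAverage_indicator_sub_le (hPI : WeakPoincare μ 1 CP lP)
    (hD : IsDoublingWith μ Cμ) (hlP : 1 ≤ lP) :
    ∃ C : ℝ≥0, ∀ {U : Set X} {x x' : X} {δ : ℝ}, MeasurableSet U → 0 < δ → dist x' x ≤ δ →
      codimOneHausdorff μ (frontier U ∩ closedBall x (lP * (2 * δ))) ≠ ⊤ →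
      ENNReal.ofReal |⨍ y in ball x δ, U.indicator (1 : X → ℝ) y ∂μ -
          ⨍ y in ball x' δ, U.indicator (1 : X → ℝ) y ∂μ| ≤
        C * ENNReal.ofReal δ *
          (codimOneHausdorff μ (frontier U ∩ closedBall x (lP * (2 * δ))) / μ (ball x δ)) := by
  have := hD.isLocallyFiniteMeasure
  obtain ⟨C₁, hC₁⟩ := hPI.exists_setAverage_sub_le hD hlP
  obtain ⟨C₂, hC₂⟩ := hD.exists_measure_ball_mul_le 2
  refine ⟨C₁ * C₂, fun {U x x' δ} hU hδ hx' hfin => ?_⟩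
  set H := codimOneHausdorff μ (frontier U ∩ closedBall x (lP * (2 * δ)))
  obtain ⟨w, h, a, hw, hh, hwle, hug, hint, hlim, hL1⟩ :=
    exists_seq_isUpperGradientOn_tendsto_indicator hC₂ hU hfin
  have hfinite (z : X) (r : ℝ) : IsFiniteMeasure (μ.restrict (ball z r)) :=
    isFiniteMeasure_restrict.2 (hD.measure_ball_ne_top z r)
  have hwint (n : ℕ) (z : X) (r : ℝ) : IntegrableOn (w n) (ball z r) μ :=
    Integrable.of_bound (hw n).aestronglyMeasurable 1 (.of_forall (hwle n))
  have hmean (z : X) : Tendsto (fun n => ⨍ y in ball z δ, w n y ∂μ) atTop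
      (𝓝 (⨍ y in ball z δ, U.indicator 1 y ∂μ)) := by
    simp only [setAverage_eq]
    refine (tendsto_integral_of_L1 _ (measurable_one.indicator hU).aestronglyMeasurable
      (.of_forall fun n => hwint n z δ) ?_).const_smul _
    exact tendsto_of_tendsto_of_tendsto_of_le_of_le tendsto_const_nhds hL1 (fun _ => zero_le)
      fun n => setLIntegral_le_lintegral _ _
  have hbound (n : ℕ) : ENNReal.ofReal |⨍ y in ball x δ, w n y ∂μ - ⨍ y in ball x' δ, w n y ∂μ| ≤
      C₁ * ENNReal.ofReal δ * (C₂ * a n / μ (ball x δ)) := by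
    have hloc : LocallyIntegrable (w n) μ :=
      (memLp_top_of_bound (hw n).aestronglyMeasurable 1
        (.of_forall (hwle n))).locallyIntegrable le_top
    refine (hC₁ hloc (hwint n x _) (hh n) hδ hx' (hug n)).trans ?_
    gcongr
    exact (setLIntegral_le_lintegral _ _).trans (hint n)
  calc _ ≤ C₁ * ENNReal.ofReal δ * (C₂ * H / μ (ball x δ)) := by
        refine le_of_tendsto_of_tendsto' (ENNReal.tendsto_ofReal ((hmean x).sub (hmean x')).abs)
          (ENNReal.Tendsto.const_mul (ENNReal.Tendsto.div_const (ENNReal.Tendsto.const_mul hlim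
            (.inr ENNReal.coe_ne_top)) (.inr (hD.measure_ball_pos x hδ).ne')) (.inr ?_)) hbound
        exact ENNReal.mul_ne_top ENNReal.coe_ne_top ENNReal.ofReal_ne_top
    _ = _ := by rw [ENNReal.coe_mul, mul_div_assoc]; ring

end JumpBound

section CurveIntegral

theorem exists_mem_Icc_eq_forall_lt {f : ℝ → ℝ} {a b t y : ℝ} (hf : ContinuousOn f (Icc a b))
    (ht : t ∈ Icc a b) (ha : f a ≤ y) (hty : y ≤ f t) :
    ∃ c ∈ Icc a b, f c = y ∧ ∀ s ∈ Ico a c, f s < y := by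
  have value_taken {s : ℝ} (hs : s ∈ Icc a b) (hys : y ≤ f s) : ∃ c ∈ Icc a s, f c = y :=
    intermediate_value_Icc hs.1 (hf.mono (Icc_subset_Icc_right hs.2)) ⟨ha, hys⟩
  have hcomp : IsCompact (Icc a b ∩ f ⁻¹' {y}) := isCompact_Icc.of_isClosed_subset
    (hf.preimage_isClosed_of_isClosed isClosed_Icc isClosed_singleton) inter_subset_left
  obtain ⟨c, ⟨hc, hcy⟩, hleast⟩ : ∃ c, IsLeast (Icc a b ∩ f ⁻¹' {y}) c := by
    obtain ⟨c, hc, hcy⟩ := value_taken ht hty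
    exact hcomp.exists_isLeast ⟨c, Icc_subset_Icc_right ht.2 hc, hcy⟩
  refine ⟨c, hc, hcy, fun s hs => ?_⟩
  by_contra! hys
  have hsb : s ∈ Icc a b := ⟨hs.1, hs.2.le.trans hc.2⟩
  obtain ⟨d, hd, hdy⟩ := value_taken hsb hys
  exact ((hleast ⟨Icc_subset_Icc_right hsb.2 hd, hdy⟩).trans hd.2).not_gt hs.2

variable {X : Type*} [MetricSpace X] [MeasurableSpace X] [BorelSpace X] {γ : ℝ → X}
  {a b c δ : ℝ} {v : X → ℝ} {σ : X → ℝ≥0∞}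

theorem ofReal_dist_le_hausdorffMeasure_image_Ico (hac : a ≤ c) (hγ : ContinuousOn γ (Icc a c)) :
    ENNReal.ofReal (dist (γ a) (γ c)) ≤ μH[1] (γ '' Ico a c) := by
  have hIco : Ico 0 (dist (γ a) (γ c)) ⊆ dist (γ a) '' (γ '' Ico a c) := by
    rw [image_image]
    simpa only [Function.comp_apply, dist_self] using intermediate_value_Ico hac
      ((LipschitzWith.dist_right (γ a)).continuous.comp_continuousOn hγ)
  calc ENNReal.ofReal (dist (γ a) (γ c)) = volume (Ico 0 (dist (γ a) (γ c))) := by simp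
    _ ≤ μH[1] (dist (γ a) '' (γ '' Ico a c)) := by
        rw [hausdorffMeasure_real]; exact measure_mono hIco
    _ ≤ μH[1] (γ '' Ico a c) := by
        simpa using ((LipschitzWith.dist_right (γ a)).lipschitzOnWith
          (s := γ '' Ico a c)).hausdorffMeasure_image_le zero_le_one

theorem le_setLIntegral_image_Ico {D : ℝ≥0∞} (hac : a ≤ c) (hγ : ContinuousOn γ (Icc a c))
    (hinj : InjOn γ (Icc a c)) (hne : γ a ≠ γ c)
    (hσ : ∀ z ∈ γ '' Ico a c, D ≤ ENNReal.ofReal (dist (γ a) (γ c)) * σ z) :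
    D ≤ ∫⁻ z in γ '' Ico a c, σ z ∂μH[1] := by
  have hd : ENNReal.ofReal (dist (γ a) (γ c)) ≠ 0 := by simpa using hne
  have hmeas : MeasurableSet (γ '' Ico a c) := measurableSet_Ico.image_of_continuousOn_injOn
    (hγ.mono Ico_subset_Icc_self) (hinj.mono Ico_subset_Icc_self)
  calc D = D / ENNReal.ofReal (dist (γ a) (γ c)) * ENNReal.ofReal (dist (γ a) (γ c)) :=
        (ENNReal.div_mul_cancel hd ENNReal.ofReal_ne_top).symm
    _ ≤ D / ENNReal.ofReal (dist (γ a) (γ c)) * μH[1] (γ '' Ico a c) := by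
        gcongr; exact ofReal_dist_le_hausdorffMeasure_image_Ico hac hγ
    _ = ∫⁻ _ in γ '' Ico a c, D / ENNReal.ofReal (dist (γ a) (γ c)) ∂μH[1] :=
        (setLIntegral_const _ _).symm
    _ ≤ ∫⁻ z in γ '' Ico a c, σ z ∂μH[1] := setLIntegral_mono' hmeas fun z hz =>
        ENNReal.div_le_of_le_mul' (hσ z hz)

theorem setLIntegral_image_Icc_eq_add (hc : c ∈ Icc a b) (hγ : ContinuousOn γ (Icc a b))
    (hinj : InjOn γ (Icc a b)) (ν : Measure X) :
    ∫⁻ z in γ '' Icc a b, σ z ∂ν =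
      ∫⁻ z in γ '' Ico a c, σ z ∂ν + ∫⁻ z in γ '' Icc c b, σ z ∂ν := by
  have hdisj : Disjoint (γ '' Ico a c) (γ '' Icc c b) := by
    refine (Set.disjoint_left.2 fun t ht ht' => ht.2.not_ge ht'.1).image hinj
      (Ico_subset_Icc_self.trans (Icc_subset_Icc_right hc.2)) (Icc_subset_Icc_left hc.1)
  rw [← lintegral_union (isCompact_Icc.image_of_continuousOn
      (hγ.mono (Icc_subset_Icc_left hc.1))).measurableSet hdisj,
    ← image_union, Ico_union_Icc_eq_Icc hc.1 hc.2]

theorem exists_dist_eq_ofReal_sub_le_setLIntegral (hδ : 0 < δ) (hab : a ≤ b)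
    (hγ : ContinuousOn γ (Icc a b)) (hinj : InjOn γ (Icc a b)) (hgt : δ < dist (γ a) (γ b))
    (hstep : ∀ x' ∈ γ '' Icc a b, ∀ z ∈ γ '' Icc a b, dist (γ a) x' ≤ δ → dist (γ a) z ≤ δ →
      ENNReal.ofReal (v (γ a) - v x') ≤ ENNReal.ofReal δ * σ z) :
    ∃ c ∈ Icc a b, dist (γ a) (γ c) = δ ∧
      ENNReal.ofReal (v (γ a) - v (γ c)) ≤ ∫⁻ z in γ '' Ico a c, σ z ∂μH[1] := by
  have hdist : ContinuousOn (fun t => dist (γ a) (γ t)) (Icc a b) :=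
    (LipschitzWith.dist_right (γ a)).continuous.comp_continuousOn hγ
  obtain ⟨c, hc, hcδ, hlt⟩ := exists_mem_Icc_eq_forall_lt hdist (right_mem_Icc.2 hab)
    ((dist_self (γ a)).trans_le hδ.le) hgt.le
  have hsub : Icc a c ⊆ Icc a b := Icc_subset_Icc_right hc.2
  refine ⟨c, hc, hcδ, le_setLIntegral_image_Ico hc.1 (hγ.mono hsub) (hinj.mono hsub)
    (dist_pos.1 (hδ.trans_eq hcδ.symm)) ?_⟩
  rintro _ ⟨t, ht, rfl⟩
  rw [hcδ]
  exact hstep _ (mem_image_of_mem γ hc) _ (mem_image_of_mem γ (hsub (Ico_subset_Icc_self ht)))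
    hcδ.le (hlt t ht).le

theorem ofReal_le_setLIntegral_hausdorffMeasure_image_Icc (hδ : 0 < δ) (hab : a ≤ b)
    (hγ : ContinuousOn γ (Icc a b)) (hinj : InjOn γ (Icc a b))
    (hstep : ∀ x ∈ γ '' Icc a b, ∀ x' ∈ γ '' Icc a b, ∀ z ∈ γ '' Icc a b, dist x x' ≤ δ →
      dist x z ≤ δ → ENNReal.ofReal (v x - v x') ≤ ENNReal.ofReal δ * σ z)
    (hend : ∀ z ∈ γ '' Icc a b, dist z (γ b) ≤ δ → v z ≤ 0) :
    ENNReal.ofReal (v (γ a)) ≤ ∫⁻ z in γ '' Icc a b, σ z ∂μH[1] := by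
  obtain ⟨τ, hτ, huc⟩ := Metric.uniformContinuousOn_iff.1
    (isCompact_Icc.uniformContinuousOn_of_continuous hγ) δ hδ
  suffices chain : ∀ n : ℕ, ∀ s ∈ Icc a b, b - s ≤ n * τ →
      ENNReal.ofReal (v (γ s)) ≤ ∫⁻ z in γ '' Icc s b, σ z ∂μH[1] by
    obtain ⟨n, hn⟩ := exists_nat_ge ((b - a) / τ)
    exact chain n a (left_mem_Icc.2 hab) ((div_le_iff₀ hτ).1 hn)
  have near_end {s : ℝ} (hs : s ∈ Icc a b) (h : dist (γ s) (γ b) ≤ δ) :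
      ENNReal.ofReal (v (γ s)) ≤ ∫⁻ z in γ '' Icc s b, σ z ∂μH[1] := by
    rw [ENNReal.ofReal_of_nonpos (hend _ (mem_image_of_mem γ hs) h)]
    exact zero_le
  intro n
  induction n with
  | zero =>
    intro s hs hsb
    have hsb : s = b := le_antisymm hs.2 (by simpa using hsb)
    exact near_end hs (by simpa [hsb] using hδ.le)
  | succ n ih =>
    intro s hs hsb
    rcases le_or_gt (dist (γ s) (γ b)) δ with hle | hgt
    · exact near_end hs hle
    have hsub : Icc s b ⊆ Icc a b := Icc_subset_Icc_left hs.1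
    obtain ⟨c, hc, hcδ, hsc⟩ := exists_dist_eq_ofReal_sub_le_setLIntegral hδ hs.2 (hγ.mono hsub)
      (hinj.mono hsub) hgt fun x' hx' z hz => hstep _ (mem_image_of_mem γ hs) _
        (image_mono hsub hx') _ (image_mono hsub hz)
    have hcs : τ ≤ c - s := by
      by_contra! h
      have := huc s hs c (hsub hc)
        (by rwa [dist_comm, Real.dist_eq, abs_of_nonneg (sub_nonneg.2 hc.1)])
      exact this.ne hcδ
    have hcb := ih c (hsub hc) (by push_cast at hsb; linarith)
    calc ENNReal.ofReal (v (γ s)) = ENNReal.ofReal (v (γ s) - v (γ c) + v (γ c)) := by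
          rw [sub_add_cancel]
      _ ≤ _ := ENNReal.ofReal_add_le.trans (add_le_add hsc hcb)
      _ = _ := (setLIntegral_image_Icc_eq_add hc (hγ.mono hsub) (hinj.mono hsub) _).symm

end CurveIntegral

section BallKernel

variable {X : Type*} [MetricSpace X] [MeasurableSpace X] {μ : Measure X} {Cμ : ℝ}

/-- The averaging kernel at scale `δ`: the indicator function of `dist y x < Λ * δ`, normalised by
`μ (ball x δ)`, which doubling makes comparable to `μ (ball x (Λ * δ))`. -/
noncomputable def ballKernel (μ : Measure X) (Λ δ : ℝ) (x y : X) : ℝ≥0∞ :=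
  (ball x (Λ * δ)).indicator (fun _ => (μ (ball x δ))⁻¹) y

/-- The density of a measure `ν` relative to `μ` at scale `δ`, with the ball for `ν` enlarged by the
factor `Λ`. -/
noncomputable def ballDensity (ν μ : Measure X) (Λ δ : ℝ) (x : X) : ℝ≥0∞ :=
  ν (ball x (Λ * δ)) / μ (ball x δ)

namespace IsDoublingWith

theorem exists_inv_measure_ball_le (hD : IsDoublingWith μ Cμ) (A : ℝ) :
    ∃ C : ℝ≥0, ∀ (x y : X) (δ : ℝ), 0 < δ → dist x y ≤ A * δ →
      (μ (ball x δ))⁻¹ ≤ C * (μ (ball y δ))⁻¹ := by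
  obtain ⟨C, hC⟩ := hD.exists_measure_ball_mul_le (A + 1)
  refine ⟨C, fun x y δ hδ hxy => ?_⟩
  have hball : μ (ball y δ) ≤ C * μ (ball x δ) :=
    (measure_mono (ball_subset_ball' (by rw [dist_comm]; linarith))).trans (hC x δ hδ)
  rw [← div_eq_mul_inv, ENNReal.le_div_iff_mul_le (.inl (hD.measure_ball_pos y hδ).ne')
    (.inl (hD.measure_ball_ne_top y δ)), mul_comm, ← div_eq_mul_inv]
  exact ENNReal.div_le_of_le_mul hball

theorem exists_ballKernel_le_swap (hD : IsDoublingWith μ Cμ) (Λ : ℝ) :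
    ∃ C : ℝ≥0, ∀ (x y : X) (δ : ℝ), 0 < δ → ballKernel μ Λ δ x y ≤ C * ballKernel μ Λ δ y x := by
  obtain ⟨C, hC⟩ := hD.exists_inv_measure_ball_le Λ
  refine ⟨C, fun x y δ hδ => ?_⟩
  by_cases hy : y ∈ ball x (Λ * δ)
  · rw [ballKernel, ballKernel, indicator_of_mem hy, indicator_of_mem (mem_ball_comm.1 hy)]
    exact hC x y δ hδ (by rw [dist_comm]; exact (mem_ball.1 hy).le)
  · rw [ballKernel, indicator_of_notMem hy]
    exact zero_le

theorem setLIntegral_ballDensity_rpow_lt_top (hD : IsDoublingWith μ Cμ)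
    (ν : Measure X) [IsFiniteMeasure ν] {G : Set X} (hG : Bornology.IsBounded G) (Λ : ℝ) {δ p : ℝ}
    (hδ : 0 < δ) (hp : 0 ≤ p) : ∫⁻ x in G, ballDensity ν μ Λ δ x ^ p ∂μ < ⊤ := by
  rcases G.eq_empty_or_nonempty with rfl | ⟨x₀, hx₀⟩
  · simp
  obtain ⟨C, hC⟩ := hD.exists_inv_measure_ball_le (diam G / δ)
  have hGfin : μ G ≠ ⊤ :=
    ne_top_of_le_ne_top (hD.measure_ball_ne_top x₀ (diam G + 1)) <| measure_mono fun x hx =>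
      mem_ball.2 ((dist_le_diam_of_mem hG hx hx₀).trans_lt (lt_add_one _))
  have hM : ν univ * (C * (μ (ball x₀ δ))⁻¹) ≠ ⊤ :=
    ENNReal.mul_ne_top (measure_ne_top ν _) <| ENNReal.mul_ne_top ENNReal.coe_ne_top <|
      ENNReal.inv_ne_top.2 (hD.measure_ball_pos x₀ hδ).ne'
  have hbound : ∀ x ∈ G, ballDensity ν μ Λ δ x ≤ ν univ * (C * (μ (ball x₀ δ))⁻¹) := by
    intro x hx
    rw [ballDensity, div_eq_mul_inv]
    gcongr
    · exact subset_univ _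
    · exact hC x x₀ δ hδ (by rw [div_mul_cancel₀ _ hδ.ne']; exact dist_le_diam_of_mem hG hx hx₀)
  refine setLIntegral_lt_top_of_le_nnreal hGfin ⟨((ν univ * (C * (μ (ball x₀ δ))⁻¹)) ^ p).toNNReal,
    fun x hx => ?_⟩
  rw [ENNReal.coe_toNNReal (ENNReal.rpow_ne_top_of_nonneg hp hM)]
  exact ENNReal.rpow_le_rpow (hbound x hx) hp

end IsDoublingWith

variable [BorelSpace X]

theorem lintegral_ballKernel (ν μ : Measure X) (Λ δ : ℝ) (x : X) :
    ∫⁻ y, ballKernel μ Λ δ x y ∂ν = ballDensity ν μ Λ δ x := by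
  simp only [ballKernel]
  rw [lintegral_indicator measurableSet_ball, setLIntegral_const, mul_comm, ballDensity,
    div_eq_mul_inv]

theorem IsDoublingWith.exists_lintegral_ballKernel_le (hD : IsDoublingWith μ Cμ) (Λ : ℝ) :
    ∃ C : ℝ≥0, ∀ δ, 0 < δ → (∀ y, ∫⁻ x, ballKernel μ Λ δ x y ∂μ ≤ C) ∧
      ∀ x, ∫⁻ y, ballKernel μ Λ δ x y ∂μ ≤ C := by
  obtain ⟨A, hA⟩ := hD.exists_measure_ball_mul_le Λ
  obtain ⟨B, hB⟩ := hD.exists_ballKernel_le_swap Λ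
  have hright (δ : ℝ) (hδ : 0 < δ) (x : X) : ∫⁻ y, ballKernel μ Λ δ x y ∂μ ≤ A := by
    rw [lintegral_ballKernel]
    exact ENNReal.div_le_of_le_mul (hA x δ hδ)
  refine ⟨max (B * A) A, fun δ hδ => ⟨fun y => ?_, fun x => ?_⟩⟩
  · calc ∫⁻ x, ballKernel μ Λ δ x y ∂μ
        ≤ ∫⁻ x, B * ballKernel μ Λ δ y x ∂μ := lintegral_mono fun x => hB x y δ hδ
      _ = B * ∫⁻ x, ballKernel μ Λ δ y x ∂μ := lintegral_const_mul' _ _ ENNReal.coe_ne_top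
      _ ≤ B * A := by gcongr; exact hright δ hδ y
      _ ≤ (max (B * A) A : ℝ≥0) := by exact_mod_cast le_max_left (B * A) A
  · exact (hright δ hδ x).trans (by exact_mod_cast le_max_right (B * A) A)

variable [SecondCountableTopology X]

theorem measurableSet_setOf_dist_snd_fst_lt (r : ℝ) :
    MeasurableSet {z : X × X | dist z.2 z.1 < r} :=
  (isOpen_lt (continuous_snd.dist continuous_fst) continuous_const).measurableSet

theorem measurable_measure_ball (ν : Measure X) [SFinite ν] (r : ℝ) :
    Measurable fun x => ν (ball x r) :=
  measurable_measure_prodMk_left (ν := ν) (measurableSet_setOf_dist_snd_fst_lt r)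

theorem measurable_ballKernel (μ : Measure X) [SFinite μ] (Λ δ : ℝ) :
    Measurable (Function.uncurry (ballKernel μ Λ δ)) :=
  ((measurable_measure_ball μ δ).comp measurable_fst).inv.indicator
    (measurableSet_setOf_dist_snd_fst_lt (Λ * δ))

theorem measurable_ballDensity (ν μ : Measure X) [SFinite ν] [SFinite μ] (Λ δ : ℝ) :
    Measurable (ballDensity ν μ Λ δ) :=
  (measurable_measure_ball ν _).div (measurable_measure_ball μ δ)

theorem lintegral_mul_ballDensity (ν μ m : Measure X) [SFinite ν] [SFinite μ] [SFinite m] (Λ δ : ℝ)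
    {h : X → ℝ≥0∞} (hh : Measurable h) :
    ∫⁻ x, h x * ballDensity ν μ Λ δ x ∂m = ∫⁻ y, ∫⁻ x, ballKernel μ Λ δ x y * h x ∂m ∂ν := by
  have hκ := measurable_ballKernel μ Λ δ
  calc ∫⁻ x, h x * ballDensity ν μ Λ δ x ∂m
      = ∫⁻ x, ∫⁻ y, ballKernel μ Λ δ x y * h x ∂ν ∂m := by
        refine lintegral_congr fun x => ?_
        rw [lintegral_mul_const _ hκ.of_uncurry_left, lintegral_ballKernel, mul_comm]
    _ = _ := lintegral_lintegral_swap (hκ.mul (hh.comp measurable_fst)).aemeasurable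

end BallKernel

section Schur

variable {α β : Type*} [MeasurableSpace α] [MeasurableSpace β]

theorem lintegral_mul_rpow_le {m : Measure α} {q : ℝ} (hq : 1 ≤ q) {k f : α → ℝ≥0∞}
    (hk : Measurable k) (hf : Measurable f) :
    (∫⁻ x, k x * f x ∂m) ^ q ≤ (∫⁻ x, k x ∂m) ^ (q - 1) * ∫⁻ x, k x * f x ^ q ∂m := by
  have hq0 : 0 < q := zero_lt_one.trans_le hq
  have hsplit (x : α) : k x * f x = k x ^ (1 - 1 / q) * (k x * f x ^ q) ^ (1 / q) := by
    rw [ENNReal.mul_rpow_of_nonneg _ _ (by positivity), ← ENNReal.rpow_mul,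
      mul_one_div_cancel hq0.ne', ENNReal.rpow_one, ← mul_assoc,
      ← ENNReal.rpow_add_of_nonneg _ _ (sub_nonneg.2 ((div_le_one hq0).2 hq)) (by positivity),
      sub_add_cancel, ENNReal.rpow_one]
  calc (∫⁻ x, k x * f x ∂m) ^ q
      ≤ ((∫⁻ x, k x ∂m) ^ (1 - 1 / q) * (∫⁻ x, k x * f x ^ q ∂m) ^ (1 / q)) ^ q := by
        simp only [hsplit]
        gcongr
        exact ENNReal.lintegral_mul_norm_pow_le hk.aemeasurable
          (hk.mul (hf.pow_const q)).aemeasurable (sub_nonneg.2 ((div_le_one hq0).2 hq))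
          (by positivity) (sub_add_cancel _ _)
    _ = _ := by
        rw [ENNReal.mul_rpow_of_nonneg _ _ hq0.le, ← ENNReal.rpow_mul, ← ENNReal.rpow_mul,
          one_div_mul_cancel hq0.ne', ENNReal.rpow_one, sub_mul, one_div_mul_cancel hq0.ne',
          one_mul]

/-- Schur's test. -/
theorem lintegral_lintegral_mul_rpow_le {m : Measure α} {n : Measure β} [SFinite m] [SFinite n]
    {κ : α → β → ℝ≥0∞} (hκ : Measurable (Function.uncurry κ)) {A B : ℝ≥0∞}
    (hA : ∀ y, ∫⁻ x, κ x y ∂m ≤ A) (hB : ∀ x, ∫⁻ y, κ x y ∂n ≤ B) {q : ℝ} (hq : 1 ≤ q)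
    {f : α → ℝ≥0∞} (hf : Measurable f) :
    ∫⁻ y, (∫⁻ x, κ x y * f x ∂m) ^ q ∂n ≤ A ^ (q - 1) * (B * ∫⁻ x, f x ^ q ∂m) := by
  have hfq : Measurable fun x => f x ^ q := hf.pow_const q
  have hκf : Measurable (Function.uncurry fun x y => κ x y * f x ^ q) :=
    hκ.mul (hfq.comp measurable_fst)
  calc ∫⁻ y, (∫⁻ x, κ x y * f x ∂m) ^ q ∂n
      ≤ ∫⁻ y, A ^ (q - 1) * ∫⁻ x, κ x y * f x ^ q ∂m ∂n := by
        refine lintegral_mono fun y => (lintegral_mul_rpow_le hq hκ.of_uncurry_right hf).trans ?_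
        gcongr
        exact hA y
    _ = A ^ (q - 1) * ∫⁻ x, ∫⁻ y, κ x y * f x ^ q ∂n ∂m := by
        have hint : Measurable fun y => ∫⁻ x, κ x y * f x ^ q ∂m := hκf.lintegral_prod_left'
        rw [lintegral_const_mul _ hint, lintegral_lintegral_swap hκf.aemeasurable]
    _ ≤ A ^ (q - 1) * ∫⁻ x, B * f x ^ q ∂m := by
        gcongr with x
        rw [lintegral_mul_const _ hκ.of_uncurry_left]
        gcongr
        exact hB x
    _ = _ := by rw [lintegral_const_mul _ hfq]

end Schur

section Domination

theorem exists_forall_dist_lt_norm_le_norm_add_one {Y : Type*} [PseudoMetricSpace Y] {K : Set Y}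
    (hK : IsCompact K) {f : Y → ℝ} (hf : ContinuousOn f K) :
    ∃ τ > 0, ∀ x ∈ K, ∀ y ∈ K, dist x y < τ → ‖f x‖ ≤ ‖f y‖ + 1 := by
  obtain ⟨τ, hτ, hosc⟩ :=
    Metric.uniformContinuousOn_iff.1 (hK.uniformContinuousOn_of_continuous hf) 1 one_pos
  refine ⟨τ, hτ, fun x hx y hy hxy => ?_⟩
  have hfxy := hosc x hx y hy hxy
  rw [dist_eq_norm] at hfxy
  linarith [norm_le_norm_add_norm_sub' (f x) (f y)]

theorem ae_enorm_toReal_eq {α : Type*} [MeasurableSpace α] {m : Measure α} {q : ℝ} (hq : 0 < q)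
    {h : α → ℝ≥0∞} (hh : Measurable h) (hfin : ∫⁻ x, h x ^ q ∂m ≠ ⊤) :
    ∀ᵐ x ∂m, ‖(h x).toReal‖ₑ = h x := by
  filter_upwards [ae_lt_top (hh.pow_const q) hfin] with x hx
  rw [Real.enorm_of_nonneg ENNReal.toReal_nonneg,
    ENNReal.ofReal_toReal ((ENNReal.rpow_lt_top_iff_of_pos hq).1 hx).ne]

variable {X : Type*} [MetricSpace X] [MeasurableSpace X] [BorelSpace X] {μ : Measure X} {Cμ : ℝ}

theorem exists_continuous_lintegral_enorm_sub_rpow_le {m : Measure X} [IsFiniteMeasure m] {q : ℝ}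
    (hq : 0 < q) {h : X → ℝ} (hh : Measurable h) (hfin : ∫⁻ x, ‖h x‖ₑ ^ q ∂m < ⊤) {ε : ℝ≥0∞}
    (hε : ε ≠ 0) : ∃ f : X → ℝ, Continuous f ∧ ∫⁻ x, ‖h x - f x‖ₑ ^ q ∂m ≤ ε := by
  have hq0 : ENNReal.ofReal q ≠ 0 := (ENNReal.ofReal_pos.2 hq).ne'
  have hLp : MemLp h (ENNReal.ofReal q) m := by
    refine ⟨hh.aestronglyMeasurable, ?_⟩
    rw [eLpNorm_eq_lintegral_rpow_enorm_toReal hq0 ENNReal.ofReal_ne_top,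
      ENNReal.toReal_ofReal hq.le]
    exact ENNReal.rpow_lt_top_of_nonneg (by positivity) hfin.ne
  obtain ⟨f, hf, -⟩ := hLp.exists_boundedContinuous_eLpNorm_sub_le ENNReal.ofReal_ne_top
    (ε := ε ^ (1 / q)) (by rwa [Ne, ENNReal.rpow_eq_zero_iff_of_pos (by positivity)])
  rw [eLpNorm_eq_lintegral_rpow_enorm_toReal hq0 ENNReal.ofReal_ne_top,
    ENNReal.toReal_ofReal hq.le] at hf
  exact ⟨f, f.continuous, (ENNReal.rpow_le_rpow_iff (by positivity)).1 hf⟩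

theorem setLIntegral_ballKernel_mul_enorm_le [SecondCountableTopology X] [SFinite μ] {G : Set X}
    (hG : MeasurableSet G) {Λ δ : ℝ} {C : ℝ≥0∞} {h f : X → ℝ} {y : X}
    (hC : ∫⁻ x, ballKernel μ Λ δ x y ∂μ ≤ C)
    (hosc : ∀ x ∈ G, dist x y < Λ * δ → ‖f x‖ ≤ ‖f y‖ + 1) :
    ∫⁻ x in G, ballKernel μ Λ δ x y * ‖h x‖ₑ ∂μ ≤
      ∫⁻ x in G, ballKernel μ Λ δ x y * ‖h x - f x‖ₑ ∂μ + C * ‖h y - f y‖ₑ + C * (‖h y‖ₑ + 1) := by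
  have hκ : Measurable fun x => ballKernel μ Λ δ x y :=
    (measurable_ballKernel μ Λ δ).of_uncurry_right
  have hpoint : ∀ x ∈ G, ballKernel μ Λ δ x y * ‖h x‖ₑ ≤
      ballKernel μ Λ δ x y * ‖h x - f x‖ₑ + ballKernel μ Λ δ x y * (‖f y‖ₑ + 1) := by
    intro x hx
    by_cases hxy : y ∈ ball x (Λ * δ)
    · rw [← mul_add]
      gcongr
      calc ‖h x‖ₑ = ‖h x - f x + f x‖ₑ := by rw [sub_add_cancel]
        _ ≤ ‖h x - f x‖ₑ + ‖f x‖ₑ := enorm_add_le _ _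
        _ ≤ ‖h x - f x‖ₑ + (‖f y‖ₑ + 1) := by
          gcongr
          rw [← ofReal_norm, ← ofReal_norm, ← ENNReal.ofReal_one,
            ← ENNReal.ofReal_add (norm_nonneg _) zero_le_one]
          exact ENNReal.ofReal_le_ofReal (hosc x hx (mem_ball'.1 hxy))
    · simp [ballKernel, indicator_of_notMem hxy]
  have hfy : ‖f y‖ₑ ≤ ‖h y‖ₑ + ‖h y - f y‖ₑ := by
    simpa only [_root_.sub_sub_cancel] using enorm_sub_le (a := h y) (b := h y - f y)
  calc ∫⁻ x in G, ballKernel μ Λ δ x y * ‖h x‖ₑ ∂μ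
      ≤ ∫⁻ x in G, ballKernel μ Λ δ x y * ‖h x - f x‖ₑ +
          ballKernel μ Λ δ x y * (‖f y‖ₑ + 1) ∂μ := setLIntegral_mono' hG hpoint
    _ = ∫⁻ x in G, ballKernel μ Λ δ x y * ‖h x - f x‖ₑ ∂μ +
          (∫⁻ x in G, ballKernel μ Λ δ x y ∂μ) * (‖f y‖ₑ + 1) := by
        rw [lintegral_add_right _ (hκ.mul_const _), lintegral_mul_const _ hκ]
    _ ≤ ∫⁻ x in G, ballKernel μ Λ δ x y * ‖h x - f x‖ₑ ∂μ +
          C * (‖h y‖ₑ + ‖h y - f y‖ₑ + 1) := by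
        gcongr
        exact (setLIntegral_le_lintegral _ _).trans hC
    _ = _ := by ring

theorem IsDoublingWith.exists_setLIntegral_ballKernel_add_rpow_le (hD : IsDoublingWith μ Cμ)
    (Λ : ℝ) (A : ℝ≥0) (G : Set X) {q : ℝ} (hq : 1 ≤ q) :
    ∃ B : ℝ≥0, ∀ (δ : ℝ) (w : X → ℝ≥0∞), 0 < δ → Measurable w →
      ∫⁻ y in G, (∫⁻ x in G, ballKernel μ Λ δ x y * w x ∂μ + A * w y) ^ q ∂μ ≤
        B * ∫⁻ x in G, w x ^ q ∂μ := by
  have := hD.sigmaFinite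
  have := hD.secondCountableTopology
  have hq0 : 0 ≤ q := zero_le_one.trans hq
  obtain ⟨C, hC⟩ := hD.exists_lintegral_ballKernel_le Λ
  refine ⟨2 ^ q * (C ^ (q - 1) * C + A ^ q), fun δ w hδ hw => ?_⟩
  have hwq : Measurable fun x => w x ^ q := hw.pow_const q
  have hschur : ∫⁻ y in G, (∫⁻ x in G, ballKernel μ Λ δ x y * w x ∂μ) ^ q ∂μ ≤
      (C : ℝ≥0∞) ^ (q - 1) * (C * ∫⁻ x in G, w x ^ q ∂μ) :=
    lintegral_lintegral_mul_rpow_le (measurable_ballKernel μ Λ δ)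
      (fun y => (setLIntegral_le_lintegral _ _).trans ((hC δ hδ).1 y))
      (fun x => (setLIntegral_le_lintegral _ _).trans ((hC δ hδ).2 x)) hq hw
  calc ∫⁻ y in G, (∫⁻ x in G, ballKernel μ Λ δ x y * w x ∂μ + A * w y) ^ q ∂μ
      ≤ ∫⁻ y in G, 2 ^ q *
          ((∫⁻ x in G, ballKernel μ Λ δ x y * w x ∂μ) ^ q + A ^ q * w y ^ q) ∂μ := by
        refine lintegral_mono fun y => (add_rpow_le_two_rpow_mul hq0 _ _).trans_eq ?_
        rw [ENNReal.mul_rpow_of_nonneg _ _ hq0]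
    _ = 2 ^ q * (∫⁻ y in G, (∫⁻ x in G, ballKernel μ Λ δ x y * w x ∂μ) ^ q ∂μ +
          A ^ q * ∫⁻ y in G, w y ^ q ∂μ) := by
        rw [lintegral_const_mul' _ _ (by finiteness), lintegral_add_right _ (hwq.const_mul _),
          lintegral_const_mul _ hwq]
    _ ≤ 2 ^ q * ((C : ℝ≥0∞) ^ (q - 1) * (C * ∫⁻ x in G, w x ^ q ∂μ) +
          A ^ q * ∫⁻ y in G, w y ^ q ∂μ) := by gcongr
    _ = _ := by
        push_cast [ENNReal.coe_rpow_of_nonneg _ hq0, ENNReal.coe_rpow_of_nonneg _ (sub_nonneg.2 hq)]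
        ring

theorem IsDoublingWith.exists_setLIntegral_ballKernel_mul_le_add (hD : IsDoublingWith μ Cμ)
    {G : Set X} (hG : MeasurableSet G) (hGc : IsCompact (closure G)) {Λ : ℝ} (hΛ : 0 < Λ) {q : ℝ}
    (hq : 1 ≤ q) {h : X → ℝ≥0∞} (hh : Measurable h) (hfin : ∫⁻ x in G, h x ^ q ∂μ ≠ ⊤) :
    ∃ C : ℝ≥0, ∀ (ε : ℝ≥0∞) (δ₀ : ℝ), ε ≠ 0 → 0 < δ₀ →
      ∃ δ ∈ Ioo 0 δ₀, ∃ d : X → ℝ≥0∞, Measurable d ∧ ∫⁻ y in G, d y ^ q ∂μ ≤ ε ∧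
        ∀ y ∈ G, ∫⁻ x in G, ballKernel μ Λ δ x y * h x ∂μ ≤ d y + C * (h y + 1) := by
  have := hD.sigmaFinite
  have := hD.secondCountableTopology
  have := hD.isLocallyFiniteMeasure
  have : IsFiniteMeasure (μ.restrict G) :=
    isFiniteMeasure_restrict.2 ((measure_mono subset_closure).trans_lt hGc.measure_lt_top).ne
  have hq0 : 0 < q := zero_lt_one.trans_le hq
  have hae := ae_enorm_toReal_eq hq0 hh hfin
  have hint : ∫⁻ x in G, ‖(h x).toReal‖ₑ ^ q ∂μ < ⊤ := by
    rwa [lintegral_congr_ae (hae.mono fun x hx => by rw [hx]), lt_top_iff_ne_top]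
  obtain ⟨C, hC⟩ := hD.exists_lintegral_ballKernel_le Λ
  obtain ⟨B, hB⟩ := hD.exists_setLIntegral_ballKernel_add_rpow_le Λ C G hq
  refine ⟨C, fun ε δ₀ hε hδ₀ => ?_⟩
  obtain ⟨f, hf, hfh⟩ := exists_continuous_lintegral_enorm_sub_rpow_le hq0 hh.ennreal_toReal hint
    (ENNReal.div_ne_zero.2 ⟨hε, ENNReal.coe_ne_top (r := B)⟩)
  obtain ⟨τ, hτ, hosc⟩ := exists_forall_dist_lt_norm_le_norm_add_one hGc hf.continuousOn
  obtain ⟨δ, hδ, hδτ⟩ := exists_between (lt_min hδ₀ (div_pos hτ hΛ))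
  rw [lt_min_iff, lt_div_iff₀' hΛ] at hδτ
  have hw : Measurable fun x => ‖(h x).toReal - f x‖ₑ :=
    (hh.ennreal_toReal.sub hf.measurable).enorm
  have hκw : Measurable fun y => ∫⁻ x in G, ballKernel μ Λ δ x y * ‖(h x).toReal - f x‖ₑ ∂μ :=
    ((measurable_ballKernel μ Λ δ).mul (hw.comp measurable_fst)).lintegral_prod_left'
  refine ⟨δ, ⟨hδ, hδτ.1⟩, _, hκw.add (hw.const_mul C),
    (hB δ _ hδ hw).trans ((mul_le_mul_right hfh _).trans ENNReal.mul_div_le), fun y hy => ?_⟩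
  have hcongr : ∫⁻ x in G, ballKernel μ Λ δ x y * h x ∂μ =
      ∫⁻ x in G, ballKernel μ Λ δ x y * ‖(h x).toReal‖ₑ ∂μ :=
    lintegral_congr_ae (hae.mono fun x hx => by simp only [hx])
  refine hcongr.trans_le <| (setLIntegral_ballKernel_mul_enorm_le hG ((hC δ hδ).1 y) fun x hx hxy =>
    hosc x (subset_closure hx) y (subset_closure hy) (hxy.trans hδτ.2)).trans (add_le_add le_rfl ?_)
  gcongr
  exact (Real.enorm_of_nonneg ENNReal.toReal_nonneg).trans_le ENNReal.ofReal_toReal_le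

/-- Continuous approximation of `h` bounds its averages by `h` itself up to an `L^q` error that
vanishes along suitable scales; summing a geometric sequence of such errors replaces the
Hardy–Littlewood maximal function. -/
theorem IsDoublingWith.exists_frequently_setLIntegral_ballKernel_mul_le (hD : IsDoublingWith μ Cμ)
    {G : Set X} (hG : MeasurableSet G) (hGc : IsCompact (closure G)) {Λ : ℝ} (hΛ : 0 < Λ) {q : ℝ}
    (hq : 1 ≤ q) {h : X → ℝ≥0∞} (hh : Measurable h) (hfin : ∫⁻ x in G, h x ^ q ∂μ ≠ ⊤) :
    ∃ g : X → ℝ≥0∞, Measurable g ∧ ∫⁻ x in G, g x ^ q ∂μ < ⊤ ∧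
      ∃ᶠ δ in 𝓝[>] 0, ∀ y ∈ G, ∫⁻ x in G, ballKernel μ Λ δ x y * h x ∂μ ≤ g y := by
  have := hD.isLocallyFiniteMeasure
  have hq0 : 0 < q := zero_lt_one.trans_le hq
  obtain ⟨C, hC⟩ := hD.exists_setLIntegral_ballKernel_mul_le_add hG hGc hΛ hq hh hfin
  have hε (n : ℕ) : (2⁻¹ : ℝ≥0∞) ^ n / (2 ^ (n + 1)) ^ q ≠ 0 :=
    ENNReal.div_ne_zero.2 ⟨pow_ne_zero _ (by simp), by finiteness⟩
  choose δ hδ d hdm hd hbound using fun n : ℕ =>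
    hC (2⁻¹ ^ n / (2 ^ (n + 1)) ^ q) (1 / (n + 1)) (hε n) Nat.one_div_pos_of_nat
  have hhm : Measurable fun y => C * (h y + 1) := (hh.add_const 1).const_mul (C : ℝ≥0∞)
  have hδtendsto : Tendsto δ atTop (𝓝[>] 0) :=
    tendsto_nhdsWithin_iff.2 ⟨squeeze_zero (fun n => (hδ n).1.le) (fun n => (hδ n).2.le)
      tendsto_one_div_add_atTop_nhds_zero_nat, .of_forall fun n => (hδ n).1⟩
  have hconst : ∫⁻ _ in G, (1 : ℝ≥0∞) ^ q ∂μ < ⊤ := by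
    rw [ENNReal.one_rpow, setLIntegral_one]
    exact (measure_mono subset_closure).trans_lt hGc.measure_lt_top
  have hhint : ∫⁻ y in G, (C * (h y + 1)) ^ q ∂μ < ⊤ := by
    simp only [ENNReal.mul_rpow_of_nonneg _ _ hq0.le]
    rw [lintegral_const_mul' _ _ (by finiteness)]
    exact ENNReal.mul_lt_top (by finiteness)
      (ENNReal.lintegral_rpow_add_lt_top_of_lintegral_rpow_lt_top hh.aemeasurable hfin.lt_top
        hconst hq)
  refine ⟨fun y => ∑' n, d n y + C * (h y + 1), (Measurable.tsum hdm).add hhm,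
    ENNReal.lintegral_rpow_add_lt_top_of_lintegral_rpow_lt_top (Measurable.tsum hdm).aemeasurable
      (lintegral_tsum_rpow_lt_top hq0 hdm hd) hhint hq,
    hδtendsto.frequently (.of_forall fun n y hy => (hbound n y hy).trans
      (add_le_add (ENNReal.le_tsum n) le_rfl))⟩

end Domination

section Separation

theorem disjoint_frontier_connectedComponentIn {Y : Type*} [TopologicalSpace Y] {W : Set Y}
    (hW : ∀ y, IsOpen (connectedComponentIn W y)) (x : Y) :
    Disjoint (frontier (connectedComponentIn W x)) W := by
  refine disjoint_left.2 fun z hz hzW => ?_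
  obtain ⟨w, hwz, hwx⟩ := mem_closure_iff.1 hz.1 _ (hW z) (mem_connectedComponentIn hzW)
  have heq : connectedComponentIn W x = connectedComponentIn W z :=
    (connectedComponentIn_eq hwx).trans (connectedComponentIn_eq hwz).symm
  exact hz.2 ((hW x).interior_eq.symm ▸ heq ▸ mem_connectedComponentIn hzW)

theorem disjoint_connectedComponentIn {Y : Type*} [TopologicalSpace Y] {W : Set Y} {x y : Y}
    (h : connectedComponentIn W x ≠ connectedComponentIn W y) :
    Disjoint (connectedComponentIn W x) (connectedComponentIn W y) :=
  disjoint_left.2 fun _ hx hy =>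
    h ((connectedComponentIn_eq hx).trans (connectedComponentIn_eq hy).symm)

theorem setAverage_indicator_one_of_subset {α : Type*} [MeasurableSpace α] {μ : Measure α}
    {s U : Set α} (hs : MeasurableSet s) (h0 : μ s ≠ 0) (htop : μ s ≠ ⊤) (hsU : s ⊆ U) :
    ⨍ y in s, U.indicator (1 : α → ℝ) y ∂μ = 1 := by
  rw [setAverage_congr_fun hs (.of_forall fun y hy => indicator_of_mem (hsU hy) 1)]
  exact setAverage_const h0 htop 1

theorem setAverage_indicator_eq_zero_of_disjoint {α : Type*} [MeasurableSpace α] {μ : Measure α}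
    {s U : Set α} (hs : MeasurableSet s) (hsU : Disjoint s U) (f : α → ℝ) :
    ⨍ y in s, U.indicator f y ∂μ = 0 := by
  rw [setAverage_congr_fun hs
    (.of_forall fun y hy => indicator_of_notMem (hsU.notMem_of_mem_left hy) f)]
  simp

variable {X : Type*} [MetricSpace X] [MeasurableSpace X] [BorelSpace X] {μ : Measure X}
  {Cμ CP lP : ℝ}

namespace WeakPoincare

theorem exists_isOpen_disjoint_of_mem_surfaceSets (hPI : WeakPoincare μ 1 CP lP)
    (hD : IsDoublingWith μ Cμ) (hlP : 1 ≤ lP) {G E F S : Set X} (hG : IsOpen G)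
    (hGc : IsCompact (closure G)) (hS : S ∈ surfaceSets μ E F G) :
    ∃ U V : Set X, IsOpen U ∧ IsOpen V ∧ E ⊆ U ∧ F ⊆ V ∧ Disjoint U V ∧ frontier U ∩ G ⊆ S := by
  obtain ⟨hScompact, -, -, x, -, y, -, hE, hF, hxy⟩ := hS
  have hopen := hPI.isOpen_connectedComponentIn hD hlP (hG.sdiff hScompact.isClosed) hGc
    (sdiff_subset.trans subset_closure)
  refine ⟨_, _, hopen x, hopen y, hE, hF, disjoint_connectedComponentIn hxy, fun z hz => ?_⟩
  by_contra hzS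
  exact disjoint_left.1 (disjoint_frontier_connectedComponentIn hopen x) hz.1 ⟨hz.2, hzS⟩

theorem exists_setAverage_indicator_sub_le_ballDensity (hPI : WeakPoincare μ 1 CP lP)
    (hD : IsDoublingWith μ Cμ) (hlP : 1 ≤ lP) :
    ∃ C : ℝ≥0, ∀ {U A : Set X} {x x' z : X} {δ : ℝ}, MeasurableSet U →
      codimOneHausdorff μ A ≠ ⊤ → 0 < δ → frontier U ∩ closedBall x (lP * (2 * δ)) ⊆ A →
      dist x x' ≤ δ → dist x z ≤ δ →
      ENNReal.ofReal (⨍ y in ball x δ, U.indicator (1 : X → ℝ) y ∂μ -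
          ⨍ y in ball x' δ, U.indicator (1 : X → ℝ) y ∂μ) ≤
        ENNReal.ofReal δ *
          (C * ballDensity ((codimOneMeasure μ).restrict A) μ (2 * lP + 2) δ z) := by
  obtain ⟨C, hC⟩ := hPI.exists_setAverage_indicator_sub_le hD hlP
  obtain ⟨B, hB⟩ := hD.exists_inv_measure_ball_le 1
  refine ⟨C * B, fun {U A x x' z δ} hU hAfin hδ hUA hxx' hxz => ?_⟩
  set T : Set X := frontier U ∩ closedBall x (lP * (2 * δ))
  have hTm : MeasurableSet T := isClosed_frontier.measurableSet.inter measurableSet_closedBall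
  have hTfin : codimOneHausdorff μ T ≠ ⊤ := ne_top_of_le_ne_top hAfin (codimOneHausdorff_mono hUA)
  have hTball : T ⊆ ball z ((2 * lP + 2) * δ) := by
    intro y hy
    have hyx : dist y x ≤ lP * (2 * δ) := hy.2
    rw [mem_ball]
    linarith [dist_triangle y x z]
  have hTle : codimOneHausdorff μ T ≤
      (codimOneMeasure μ).restrict A (ball z ((2 * lP + 2) * δ)) := by
    rw [← codimOneMeasure_apply hTm hTfin, Measure.restrict_apply measurableSet_ball]
    exact measure_mono (subset_inter hTball hUA)
  calc ENNReal.ofReal (⨍ y in ball x δ, U.indicator (1 : X → ℝ) y ∂μ -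
          ⨍ y in ball x' δ, U.indicator (1 : X → ℝ) y ∂μ)
      ≤ C * ENNReal.ofReal δ * (codimOneHausdorff μ T / μ (ball x δ)) :=
        (ENNReal.ofReal_le_ofReal (le_abs_self _)).trans
          (hC hU hδ (by rwa [dist_comm]) hTfin)
    _ ≤ C * ENNReal.ofReal δ * ((codimOneMeasure μ).restrict A (ball z ((2 * lP + 2) * δ)) *
          (B * (μ (ball z δ))⁻¹)) := by
        rw [div_eq_mul_inv]
        gcongr
        exact hB x z δ hδ (by rwa [one_mul])
    _ = _ := by
        rw [ballDensity, div_eq_mul_inv, ENNReal.coe_mul]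
        ring

/-- Along a curve that leaves `U` the averages over `δ`-balls of the indicator function of `U` drop
from `1` to `0`, and every drop is paid for by the density of the part of `frontier U` nearby. -/
theorem exists_one_le_setLIntegral_ballDensity_image (hPI : WeakPoincare μ 1 CP lP)
    (hD : IsDoublingWith μ Cμ) (hlP : 1 ≤ lP) :
    ∃ C : ℝ≥0, ∀ {U A : Set X} {γ : ℝ → X} {δ : ℝ}, MeasurableSet U →
      codimOneHausdorff μ A ≠ ⊤ → 0 < δ → ContinuousOn γ (Icc 0 1) → InjOn γ (Icc 0 1) →
      ball (γ 0) δ ⊆ U → Disjoint (ball (γ 1) (2 * δ)) U →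
      (∀ x ∈ γ '' Icc 0 1, frontier U ∩ closedBall x (lP * (2 * δ)) ⊆ A) →
      1 ≤ ∫⁻ z in γ '' Icc 0 1,
        C * ballDensity ((codimOneMeasure μ).restrict A) μ (2 * lP + 2) δ z ∂μH[1] := by
  obtain ⟨C, hC⟩ := hPI.exists_setAverage_indicator_sub_le_ballDensity hD hlP
  refine ⟨C, fun {U A γ δ} hU hAfin hδ hγ hinj hstart hend hUA => ?_⟩
  let v (x : X) : ℝ := ⨍ y in ball x δ, U.indicator (1 : X → ℝ) y ∂μ
  have hone : v (γ 0) = 1 :=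
    setAverage_indicator_one_of_subset measurableSet_ball (hD.measure_ball_pos _ hδ).ne'
      (hD.measure_ball_ne_top _ _) hstart
  have hzero (z : X) (hz : dist z (γ 1) ≤ δ) : v z = 0 :=
    setAverage_indicator_eq_zero_of_disjoint measurableSet_ball
      (hend.mono_left (ball_subset_ball' (by linarith))) 1
  have hstep (x : X) (hx : x ∈ γ '' Icc 0 1) (x' z : X) (hxx' : dist x x' ≤ δ)
      (hxz : dist x z ≤ δ) : ENNReal.ofReal (v x - v x') ≤ ENNReal.ofReal δ *
        (C * ballDensity ((codimOneMeasure μ).restrict A) μ (2 * lP + 2) δ z) :=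
    hC hU hAfin hδ (hUA x hx) hxx' hxz
  have hdrop := ofReal_le_setLIntegral_hausdorffMeasure_image_Icc hδ zero_le_one hγ hinj
    (fun x hx x' _ z _ => hstep x hx x' z) fun z _ hz => (hzero z hz).le
  rwa [hone, ENNReal.ofReal_one] at hdrop

theorem exists_eventually_admissible_ballDensity (hPI : WeakPoincare μ 1 CP lP)
    (hD : IsDoublingWith μ Cμ) (hlP : 1 ≤ lP) :
    ∃ C : ℝ≥0, ∀ {G E F S K : Set X} {η : ℝ}, IsOpen G → IsCompact (closure G) → IsCompact E →
      IsCompact F → S ∈ surfaceSets μ E F G → 0 < η → (∀ x ∈ K, ball x η ⊆ G) →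
      ∀ᶠ δ in 𝓝[>] 0, Admissible (pathFamily E F K) (G.indicator fun z =>
        C * ballDensity ((codimOneMeasure μ).restrict (S ∩ G)) μ (2 * lP + 2) δ z) := by
  have := hD.sigmaFinite
  have := hD.secondCountableTopology
  obtain ⟨C, hC⟩ := hPI.exists_one_le_setLIntegral_ballDensity_image hD hlP
  refine ⟨C, fun {G E F S K η} hG hGc hE hF hS hη hK => ?_⟩
  have hSm : MeasurableSet (S ∩ G) := hS.1.measurableSet.inter hG.measurableSet
  have := isFiniteMeasure_codimOneMeasure_restrict hSm hS.2.2.1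
  obtain ⟨U, V, hU, hV, hEU, hFV, hUV, hfrontier⟩ :=
    hPI.exists_isOpen_disjoint_of_mem_surfaceSets hD hlP hG hGc hS
  obtain ⟨r, hr, hrU⟩ := hE.exists_thickening_subset_open hU hEU
  obtain ⟨s, hs, hsV⟩ := hF.exists_thickening_subset_open hV hFV
  have hlP0 : 0 < 2 * lP := by linarith
  filter_upwards [Ioo_mem_nhdsGT (lt_min hr (lt_min (half_pos hs) (div_pos hη hlP0)))]
    with δ ⟨hδ, hδlt⟩
  simp only [lt_min_iff, lt_div_iff₀' hlP0] at hδlt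
  obtain ⟨hδr, hδs, hδη⟩ := hδlt
  refine ⟨((measurable_ballDensity _ _ _ _).const_mul _).indicator hG.measurableSet, ?_⟩
  rintro ν ⟨γ, hγ, hinj, -, hγK, hγ0, hγ1, rfl⟩
  have hγG : γ '' Icc 0 1 ⊆ G := fun w hw => hK w (hγK.image_subset hw) (mem_ball_self hη)
  have hstart : ball (γ 0) δ ⊆ U :=
    (ball_subset_ball hδr.le).trans ((ball_subset_thickening hγ0 r).trans hrU)
  have hend : ball (γ 1) (2 * δ) ⊆ V :=
    (ball_subset_ball (by linarith)).trans ((ball_subset_thickening hγ1 s).trans hsV)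
  rw [setLIntegral_congr_fun (isCompact_Icc.image_of_continuousOn hγ).measurableSet
    fun z hz => indicator_of_mem (hγG hz) _]
  refine hC hU.measurableSet hS.2.2.1 hδ hγ hinj hstart (hUV.symm.mono_left hend)
    fun x hx y hy => ?_
  have hyG : y ∈ G := hK x (hγK.image_subset hx) (closedBall_subset_ball (by linarith) hy.2)
  exact ⟨hfrontier ⟨hy.1, hyG⟩, hyG⟩

end WeakPoincare

end Separation

section Duality

theorem lintegral_indicator_const_mul_rpow_lt_top {α : Type*} [MeasurableSpace α] {μ : Measure α}
    {G : Set α} {q : ℝ} (hG : MeasurableSet G) (hq : 0 < q) {C : ℝ≥0∞} (hC : C ≠ ⊤)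
    {g : α → ℝ≥0∞} (hg : ∫⁻ x in G, g x ^ q ∂μ < ⊤) :
    ∫⁻ x, G.indicator (fun z => C * g z) x ^ q ∂μ < ⊤ := by
  have hpow (x : α) : G.indicator (fun z => C * g z) x ^ q =
      G.indicator (fun z => C ^ q * g z ^ q) x := by
    by_cases hx : x ∈ G <;> simp [hx, hq, ENNReal.mul_rpow_of_nonneg _ _ hq.le]
  have hCq : C ^ q ≠ ⊤ := ENNReal.rpow_ne_top_of_nonneg hq.le hC
  simp_rw [hpow]
  rw [lintegral_indicator hG, lintegral_const_mul' _ _ hCq]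
  exact ENNReal.mul_lt_top hCq.lt_top hg

variable {X : Type*} [MetricSpace X] [MeasurableSpace X]

theorem surfModulus_empty (μ : Measure X) {q : ℝ} (hq : 0 < q) (G : Set X) :
    surfModulus μ q ∅ G = 0 :=
  le_antisymm (iInf₂_le_of_le 0 ⟨measurable_zero, by simp⟩ (by simp [hq])) zero_le

theorem pathFamily_subset_iUnion [BorelSpace X] {E F G : Set X} (hG : IsOpen G) :
    pathFamily E F G ⊆ ⋃ n : ℕ, pathFamily E F {x | ball x (1 / (n + 1)) ⊆ G} := by
  rintro ν ⟨γ, hγ, hinj, hvar, hγG, hγ0, hγ1, rfl⟩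
  obtain ⟨ε, hε, hεG⟩ :=
    (isCompact_Icc.image_of_continuousOn hγ).exists_thickening_subset_open hG hγG.image_subset
  obtain ⟨n, hn⟩ := exists_nat_one_div_lt hε
  exact mem_iUnion.2 ⟨n, γ, hγ, hinj, hvar, fun t ht => (ball_subset_ball hn.le).trans
    ((ball_subset_thickening (mem_image_of_mem γ ht) ε).trans hεG), hγ0, hγ1, rfl⟩

variable [BorelSpace X] {μ : Measure X} {G E F K : Set X} {η p q : ℝ} {Cμ CP lP : ℝ}

theorem surfModulus_lt_top_of_forall_le_setLIntegral {𝒮 : Set (Set X)} (hq : 0 < q)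
    (hG : MeasurableSet G) (h𝒮 : ∀ S ∈ 𝒮, MeasurableSet (S ∩ G))
    (h𝒮fin : ∀ S ∈ 𝒮, codimOneHausdorff μ (S ∩ G) ≠ ⊤) {g : X → ℝ≥0∞} (hg : Measurable g)
    (hgq : ∫⁻ x in G, g x ^ q ∂μ < ⊤) {c : ℝ≥0∞} (hc : c ≠ 0)
    (hle : ∀ S ∈ 𝒮, c ≤ ∫⁻ y in S ∩ G, g y ∂codimOneMeasure μ) : surfModulus μ q 𝒮 G < ⊤ := by
  have hc' : min c 1 ≠ 0 := by simp [hc]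
  have hinv : (min c 1)⁻¹ ≠ ⊤ := ENNReal.inv_ne_top.2 hc'
  have hρ : Measurable (G.indicator fun x => (min c 1)⁻¹ * g x) := (hg.const_mul _).indicator hG
  refine (iInf₂_le _ ⟨hρ, fun S hS => ?_⟩).trans_lt
    (lintegral_indicator_const_mul_rpow_lt_top hG hq hinv hgq)
  rw [codimIntegral_eq_setLIntegral (h𝒮 S hS) (h𝒮fin S hS) hρ,
    setLIntegral_congr_fun (h𝒮 S hS) fun x hx => indicator_of_mem hx.2 _,
    lintegral_const_mul _ hg]
  refine (ENNReal.inv_mul_cancel hc' (by simp)).ge.trans (mul_le_mul_right ?_ _)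
  exact (min_le_left c 1).trans (hle S hS)

theorem lintegral_mul_indicator_ballDensity [SecondCountableTopology X] [SFinite μ]
    (ν : Measure X) [SFinite ν] (C : ℝ≥0∞) (Λ δ : ℝ) (hG : MeasurableSet G) {h : X → ℝ≥0∞}
    (hh : Measurable h) :
    ∫⁻ x, h x * G.indicator (fun z => C * ballDensity ν μ Λ δ z) x ∂μ =
      C * ∫⁻ y, ∫⁻ x in G, ballKernel μ Λ δ x y * h x ∂μ ∂ν := by
  have hpt (x : X) : h x * G.indicator (fun z => C * ballDensity ν μ Λ δ z) x =
      G.indicator (fun z => C * (h z * ballDensity ν μ Λ δ z)) x := by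
    by_cases hx : x ∈ G <;> simp [hx, mul_left_comm]
  simp_rw [hpt]
  have hmul : Measurable fun x => h x * ballDensity ν μ Λ δ x :=
    hh.mul (measurable_ballDensity ν μ Λ δ)
  rw [lintegral_indicator hG, lintegral_const_mul _ hmul, lintegral_mul_ballDensity ν μ _ Λ δ hh]

namespace WeakPoincare

/-- Pairing a dual function `h` of the path family with the density of a surface and exchanging the
order of integration produces a surface integral, whose integrand is dominated by a function `g`
independent of the surface. -/
theorem exists_forall_le_setLIntegral_codimOneMeasure (hPI : WeakPoincare μ 1 CP lP)
    (hD : IsDoublingWith μ Cμ) (hlP : 1 ≤ lP) (hp : 1 < p) (hG : IsOpen G)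
    (hGc : IsCompact (closure G)) (hE : IsCompact E) (hF : IsCompact F) (hη : 0 < η)
    (hK : ∀ x ∈ K, ball x η ⊆ G) (hne : (surfaceSets μ E F G).Nonempty)
    (h0 : modulus μ p (pathFamily E F K) ≠ 0) :
    ∃ g : X → ℝ≥0∞, Measurable g ∧ ∫⁻ x in G, g x ^ (p / (p - 1)) ∂μ < ⊤ ∧
      ∃ c ≠ 0, ∀ S ∈ surfaceSets μ E F G, c ≤ ∫⁻ y in S ∩ G, g y ∂codimOneMeasure μ := by
  have := hD.sigmaFinite
  have := hD.secondCountableTopology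
  have hq : 1 ≤ p / (p - 1) := (one_le_div (sub_pos.2 hp)).2 (by linarith)
  have hp0 : 0 < p := one_pos.trans hp
  have hGm := hG.measurableSet
  obtain ⟨C, hC⟩ := hPI.exists_eventually_admissible_ballDensity hD hlP
  have hfinite {S} (hS : S ∈ surfaceSets μ E F G) :
      IsFiniteMeasure ((codimOneMeasure μ).restrict (S ∩ G)) :=
    isFiniteMeasure_codimOneMeasure_restrict (hS.1.measurableSet.inter hGm) hS.2.2.1
  have hdensity {S} (hS : S ∈ surfaceSets μ E F G) {δ : ℝ} (hδ : 0 < δ) :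
      ∫⁻ x, G.indicator (fun z => C * ballDensity ((codimOneMeasure μ).restrict (S ∩ G)) μ
        (2 * lP + 2) δ z) x ^ p ∂μ < ⊤ :=
    have := hfinite hS
    lintegral_indicator_const_mul_rpow_lt_top hGm hp0 coe_ne_top
      (hD.setLIntegral_ballDensity_rpow_lt_top _ (hGc.isBounded.subset subset_closure) _ hδ hp0.le)
  have hfin : modulus μ p (pathFamily E F K) ≠ ⊤ := by
    obtain ⟨S, hS⟩ := hne
    obtain ⟨δ, hadm, hδ⟩ :=
      ((hC hG hGc hE hF hS hη hK).and self_mem_nhdsWithin).exists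
    exact ((modulus_le_lintegral hadm).trans_lt (hdensity hS hδ)).ne
  obtain ⟨h, hh, hhq, c, hc, hdual⟩ := exists_dual_of_modulus_ne_zero hp h0 hfin
  obtain ⟨g, hg, hgq, hdom⟩ := hD.exists_frequently_setLIntegral_ballKernel_mul_le hGm hGc
    (Λ := 2 * lP + 2) (by linarith) hq hh ((setLIntegral_le_lintegral _ _).trans_lt hhq).ne
  refine ⟨g, hg, hgq, c / C, ENNReal.div_ne_zero.2 ⟨hc, coe_ne_top⟩, fun S hS => ?_⟩
  have := hfinite hS
  obtain ⟨δ, hδg, hadm, hδ⟩ :=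
    (hdom.and_eventually ((hC hG hGc hE hF hS hη hK).and self_mem_nhdsWithin)).exists
  refine ENNReal.div_le_of_le_mul' ((hdual _ hadm (hdensity hS hδ).ne).trans ?_)
  rw [lintegral_mul_indicator_ballDensity _ _ _ _ hGm hh]
  exact mul_le_mul_right (setLIntegral_mono hg fun y hy => hδg y hy.2) _

theorem surfModulus_lt_top_of_modulus_pathFamily_ne_zero (hPI : WeakPoincare μ 1 CP lP)
    (hD : IsDoublingWith μ Cμ) (hlP : 1 ≤ lP) (hp : 1 < p) (hG : IsOpen G)
    (hGc : IsCompact (closure G)) (hE : IsCompact E) (hF : IsCompact F) (hη : 0 < η)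
    (hK : ∀ x ∈ K, ball x η ⊆ G) (h0 : modulus μ p (pathFamily E F K) ≠ 0) :
    surfModulus μ (p / (p - 1)) (surfaceSets μ E F G) G < ⊤ := by
  have hq : 0 < p / (p - 1) := div_pos (one_pos.trans hp) (sub_pos.2 hp)
  rcases (surfaceSets μ E F G).eq_empty_or_nonempty with hempty | hne
  · rw [hempty, surfModulus_empty μ hq]
    exact zero_lt_top
  obtain ⟨g, hg, hgq, c, hc, hle⟩ := hPI.exists_forall_le_setLIntegral_codimOneMeasure hD hlP hp
    hG hGc hE hF hη hK hne h0
  exact surfModulus_lt_top_of_forall_le_setLIntegral hq hG.measurableSet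
    (fun S hS => hS.1.measurableSet.inter hG.measurableSet) (fun S hS => hS.2.2.1) hg hgq hc hle

end WeakPoincare

end Duality

theorem path_modulus_zero_of_surface_modulus_infinite_general {X : Type*} [MetricSpace X]
    [MeasurableSpace X] [BorelSpace X] {μ : Measure X} {Cμ CP lP : ℝ} (hD : IsDoublingWith μ Cμ)
    (hlP : 1 ≤ lP) (hPI : WeakPoincare μ 1 CP lP) {p : ℝ} (hp : 1 < p) {G E F : Set X}
    (hG : IsOpen G) (hGc : IsCompact (closure G)) (hE : IsCompact E) (hF : IsCompact F)
    (hmod : surfModulus μ (p / (p - 1)) (surfaceSets μ E F G) G = ⊤) :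
    modulus μ p (pathFamily E F G) = 0 := by
  have hinterior (n : ℕ) :
      modulus μ p (pathFamily E F {x | ball x (1 / (n + 1)) ⊆ G}) = 0 := by
    by_contra h0
    exact (hPI.surfModulus_lt_top_of_modulus_pathFamily_ne_zero hD hlP hp hG hGc hE hF
      Nat.one_div_pos_of_nat (fun x hx => hx) h0).ne hmod
  refine le_antisymm ((modulus_mono (pathFamily_subset_iUnion hG)).trans_eq ?_) zero_le
  exact modulus_iUnion_eq_zero (one_pos.trans hp) hinterior

/-- If the dual surface modulus is infinite, the path modulus vanishes. -/
theorem path_modulus_zero_of_surface_modulus_infinite {X : Type*} [MetricSpace X]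
    [MeasurableSpace X] [BorelSpace X] [CompleteSpace X] (μ : Measure X) (hBR : BorelRegular μ)
    (Cμ : ℝ) (hCμ : 1 < Cμ) (hD : IsDoublingWith μ Cμ)
    (CP lP : ℝ) (hCP : 1 ≤ CP) (hlP : 1 ≤ lP) (hPI : WeakPoincare μ 1 CP lP)
    (p : ℝ) (hp : 1 < p) (G E F : Set X)
    (hG : IsDomainWithCompactClosure G) (hE : IsNondegContinuum E) (hF : IsNondegContinuum F)
    (hEG : E ⊆ G) (hFG : F ⊆ G) (hEF : Disjoint E F)
    (hmod : surfModulus μ (p / (p - 1)) (surfaceSets μ E F G) G = ⊤) :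
    modulus μ p (pathFamily E F G) = 0 :=
  path_modulus_zero_of_surface_modulus_infinite_general hD hlP hPI hp hG.1 hG.2.2 hE.1 hF.1 hmod
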